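/- arXiv:math/0001109 — 6 statements merged into one kernel-verified Lean document; each statement's English description precedes it below -/
import Mathlib

section
/- For any k, m ≥ 1, there are only finitely many convex lattice polytopes of dimension k containing exactly m lattice points in their interior, up to lattice isomorphism (affine maps x ↦ Ax + b with A ∈ GL_k(ℤ), b ∈ ℤ^k). -/
open Set

noncomputable section

def latPts (k : ℕ) : Set (Fin k → ℝ) :=
  Set.range (fun v : Fin k → ℤ => fun i => (v i : ℝ))

def castZ {k : ℕ} (v : Fin k → ℤ) : Fin k → ℝ := fun i => (v i : ℝ)

def IsLatticePolytope (k : ℕ) (P : Set (Fin k → ℝ)) : Prop :=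
  ∃ V : Finset (Fin k → ℤ), P = convexHull ℝ (castZ '' (V : Set (Fin k → ℤ))) ∧
    (interior P).Nonempty

def LatEquiv (k : ℕ) (P Q : Set (Fin k → ℝ)) : Prop :=
  ∃ A B : Matrix (Fin k) (Fin k) ℤ, A * B = 1 ∧ B * A = 1 ∧
    ∃ b : Fin k → ℤ,
      Q = (fun x : Fin k → ℝ => fun i => (∑ j, (A i j : ℝ) * x j) + (b i : ℝ)) '' P

/-- Simultaneous Dirichlet approximation. -/
theorem dirichlet_sim {ι : Type} [Fintype ι] (N n : ℕ) (hN : 1 ≤ N) (hn : Fintype.card ι ≤ n)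
    (a : ι → ℝ) :
    ∃ q : ℕ, 1 ≤ q ∧ q ≤ N ^ n ∧ ∃ p : ι → ℤ, ∀ i, |q * a i - p i| < 1 / N := by
  classical
  have hNpos : (0 : ℝ) < N := by exact_mod_cast hN
  have hfl : ∀ x : ℝ, ⌊Int.fract x * N⌋₊ < N := by
    intro x
    rw [Nat.floor_lt (by have := Int.fract_nonneg x; positivity)]
    have := Int.fract_lt_one x
    nlinarith
  let f : Fin (N ^ n + 1) → (ι → Fin N) := fun q i =>
    ⟨⌊Int.fract ((q : ℕ) * a i) * N⌋₊, hfl _⟩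
  have hcard : Fintype.card (ι → Fin N) < Fintype.card (Fin (N ^ n + 1)) := by
    simp only [Fintype.card_fun, Fintype.card_fin]
    exact Nat.lt_succ_of_le (Nat.pow_le_pow_right hN hn)
  obtain ⟨x, y, hxy, hf⟩ := Fintype.exists_ne_map_eq_of_card_lt f hcard
  wlog hlt : x < y generalizing x y
  · exact this y x hxy.symm hf.symm (lt_of_le_of_ne (not_lt.mp hlt) hxy.symm)
  have hlt' : (x : ℕ) < y := hlt
  refine ⟨y - x, by omega, by have := y.2; omega,
    fun i => ⌊((y : ℕ) : ℝ) * a i⌋ - ⌊((x : ℕ) : ℝ) * a i⌋, fun i => ?_⟩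
  have h1 : ⌊Int.fract ((x : ℕ) * a i) * N⌋₊ = ⌊Int.fract ((y : ℕ) * a i) * N⌋₊ := by
    have := congrFun hf i
    simpa [f] using this
  have hx := Int.fract_nonneg (((x : ℕ) : ℝ) * a i)
  have hy := Int.fract_nonneg (((y : ℕ) : ℝ) * a i)
  have h2 := Nat.floor_le (mul_nonneg hx hNpos.le)
  have h3 := Nat.lt_floor_add_one (Int.fract (((x : ℕ) : ℝ) * a i) * N)
  have h4 := Nat.floor_le (mul_nonneg hy hNpos.le)
  have h5 := Nat.lt_floor_add_one (Int.fract (((y : ℕ) : ℝ) * a i) * N)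
  rw [h1] at h2 h3
  have e : (((y : ℕ) - (x : ℕ) : ℕ) : ℝ) * a i - ((⌊((y : ℕ) : ℝ) * a i⌋ - ⌊((x : ℕ) : ℝ) * a i⌋ : ℤ) : ℝ)
      = Int.fract (((y : ℕ) : ℝ) * a i) - Int.fract (((x : ℕ) : ℝ) * a i) := by
    rw [Nat.cast_sub hlt'.le]
    push_cast
    unfold Int.fract
    ring
  rw [e, abs_lt, lt_div_iff₀ hNpos, neg_lt, lt_div_iff₀ hNpos]
  constructor <;> nlinarith

/-- The "no small perturbation" property of barycentric coordinates. -/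
def Rigid {ι : Type} [Fintype ι] (m : ℕ) (a : ι → ℝ) : Prop :=
  ∀ q : ℕ, 1 ≤ q → ∀ p : ι → ℤ, ∑ i, p i = q →
    (∀ i, ∀ j : ℕ, j ≤ m → 0 < a i + j * (q * a i - p i)) → ∀ i, q * a i = p i

theorem rigid_step (n m : ℕ) (r : ℕ) :
    ∃ c : ℝ, 0 < c ∧ ∀ (ι : Type) [Fintype ι], Fintype.card ι ≤ n → ∀ a : ι → ℝ,
      (∀ i, 0 < a i) → ∑ i, a i = 1 → Rigid m a →
      (∀ i, c ≤ a i) ∨ r ≤ (Finset.univ.filter (fun i => c ≤ a i)).card := by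
  classical
  induction r with
  | zero => exact ⟨1, one_pos, fun ι _ _ a _ _ _ => Or.inr (Nat.zero_le _)⟩
  | succ r ih =>
    obtain ⟨c, hc, ih⟩ := ih
    obtain ⟨N, hN⟩ := exists_nat_gt (max ((m + 1) / c) (2 * (n + 1)))
    have hN1 : (m + 1) / c < (N : ℝ) := lt_of_le_of_lt (le_max_left _ _) hN
    have hN2 : (2 * (n + 1) : ℝ) < N := lt_of_le_of_lt (le_max_right _ _) hN
    have hNpos : (0 : ℝ) < N := lt_trans (by positivity) hN2
    have hN0 : 1 ≤ N := by exact_mod_cast hNpos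
    set Q : ℝ := (N : ℝ) ^ n with hQ
    have hQpos : 0 < Q := by positivity
    set c' : ℝ := min c (1 / (2 * (n + 1) * Q)) with hc'
    have hc'pos : 0 < c' := lt_min hc (by positivity)
    refine ⟨c', hc'pos, fun ι _ hι a ha hs hR => ?_⟩
    rcases ih ι hι a ha hs hR with h | h
    · exact Or.inl fun i => (min_le_left _ _).trans (h i)
    by_cases hall : ∀ i, c' ≤ a i
    · exact Or.inl hall
    right
    push Not at hall
    obtain ⟨i0, hi0⟩ := hall
    by_contra hcon
    -- all outside `S` are below c'
    have hsub : Finset.univ.filter (fun i => c ≤ a i) ⊆ Finset.univ.filter (fun i => c' ≤ a i) := by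
      intro i hi
      simp only [Finset.mem_filter, Finset.mem_univ, true_and] at hi ⊢
      exact (min_le_left _ _).trans hi
    have heq := Finset.eq_of_subset_of_card_le hsub (by omega)
    have hout : ∀ i, ¬ c ≤ a i → a i < c' := by
      intro i hi
      by_contra h'
      have : i ∈ Finset.univ.filter (fun i => c' ≤ a i) := by simp; exact not_lt.mp h'
      rw [← heq] at this
      simp at this
      exact hi this
    obtain ⟨q, hq1, hqN, p, hp⟩ := dirichlet_sim N n hN0 hι a
    have hqQ : (q : ℝ) ≤ Q := by rw [hQ]; exact_mod_cast hqN
    have hq0 : (0 : ℝ) < q := by exact_mod_cast hq1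
    let p' : ι → ℤ := fun i => if c ≤ a i then p i else 0
    have hμ : ∀ i, |q * a i - p' i| < 1 / (2 * (n + 1)) := by
      intro i
      by_cases hi : c ≤ a i
      · simp only [p', if_pos hi]
        exact (hp i).trans (one_div_lt_one_div_of_lt (by positivity) hN2)
      · simp only [p', if_neg hi, Int.cast_zero, sub_zero]
        rw [abs_of_pos (mul_pos hq0 (ha i))]
        have h1 := hout i hi
        have h2 : c' ≤ 1 / (2 * (n + 1) * Q) := min_le_right _ _
        calc q * a i ≤ Q * a i := by gcongr; exact (ha i).le
          _ < Q * (1 / (2 * (n + 1) * Q)) := by gcongr; exact h1.trans_le h2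
          _ = 1 / (2 * (n + 1)) := by field_simp
    have hsum : ∑ i, p' i = q := by
      have h1 : |∑ i, (q * a i - p' i)| < 1 := by
        calc |∑ i, (q * a i - p' i)| ≤ ∑ i, |q * a i - p' i| := Finset.abs_sum_le_sum_abs _ _
          _ ≤ ∑ i : ι, (1 / (2 * (n + 1)) : ℝ) := Finset.sum_le_sum fun i _ => (hμ i).le
          _ = Fintype.card ι * (1 / (2 * (n + 1)) : ℝ) := by simp
          _ ≤ n * (1 / (2 * (n + 1)) : ℝ) := by
              gcongr
          _ < 1 := by
              rw [mul_one_div, div_lt_one (by positivity)]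
              have : (0 : ℝ) ≤ n := Nat.cast_nonneg n
              linarith
      rw [Finset.sum_sub_distrib, ← Finset.mul_sum, hs, mul_one] at h1
      have h2 : |(q : ℤ) - ∑ i, p' i| < 1 := by exact_mod_cast h1
      rw [Int.abs_lt_one_iff] at h2
      omega
    have hfin := hR q hq1 p' hsum ?_ i0
    · have hi0' : ¬ c ≤ a i0 := fun h => absurd ((min_le_left _ _).trans h) (not_le.mpr hi0)
      simp only [p', if_neg hi0', Int.cast_zero] at hfin
      exact absurd hfin (mul_pos hq0 (ha i0)).ne'
    · intro i j hj
      by_cases hi : c ≤ a i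
      · simp only [p', if_pos hi]
        have h1 := hp i
        have h2 : 1 / (N : ℝ) < c / (m + 1) := by
          rw [div_lt_iff₀ hc] at hN1
          rw [div_lt_div_iff₀ hNpos (by positivity)]
          linarith
        have h3 := (abs_lt.mp (h1.trans h2)).1
        have hj' : (j : ℝ) ≤ m := by exact_mod_cast hj
        have hj0 : (0 : ℝ) ≤ j := Nat.cast_nonneg j
        have h4 : (j : ℝ) * -(c / (m + 1)) ≤ j * (q * a i - p i) := by gcongr
        have h5 : (j : ℝ) * (c / (m + 1)) < c := by
          rw [mul_div_assoc', div_lt_iff₀ (by positivity)]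
          nlinarith
        linarith
      · simp only [p', if_neg hi, Int.cast_zero, sub_zero]
        have := ha i
        positivity

theorem rigid_bound (n m : ℕ) :
    ∃ c : ℝ, 0 < c ∧ ∀ (ι : Type) [Fintype ι], Fintype.card ι ≤ n → ∀ a : ι → ℝ,
      (∀ i, 0 < a i) → ∑ i, a i = 1 → Rigid m a → ∀ i, c ≤ a i := by
  obtain ⟨c, hc, h⟩ := rigid_step n m (n + 1)
  refine ⟨c, hc, fun ι _ hι a ha hs hR => ?_⟩
  rcases h ι hι a ha hs hR with h | h
  · exact h
  · have := Finset.card_le_univ (Finset.univ.filter (fun i => c ≤ a i))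
    omega

theorem min_rep {α E : Type} [DecidableEq α] [AddCommGroup E] [Module ℝ E] (g : α → E)
    (W : Finset α) (v : α) (hv : v ∈ W)
    (hex : ∃ a : α → ℝ, (∀ u ∈ W, 0 ≤ a u) ∧ 0 < a v ∧ ∑ u ∈ W, a u • g u = 0) :
    ∃ T ⊆ W, v ∈ T ∧ ∃ a : α → ℝ, (∀ u ∈ T, 0 < a u) ∧ ∑ u ∈ T, a u = 1 ∧
      ∑ u ∈ T, a u • g u = 0 ∧
      ∀ μ : α → ℝ, ∑ u ∈ T, μ u • g u = 0 → ∑ u ∈ T, μ u = 0 → ∀ u ∈ T, μ u = 0 := by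
  classical
  let Good : Finset α → Prop := fun T => T ⊆ W ∧ v ∈ T ∧ ∃ a : α → ℝ, (∀ u ∈ T, 0 < a u) ∧
      ∑ u ∈ T, a u • g u = 0
  -- from nonnegative to positive
  have key : ∀ T ⊆ W, v ∈ T → ∀ a : α → ℝ, (∀ u ∈ T, 0 ≤ a u) → 0 < a v →
      ∑ u ∈ T, a u • g u = 0 → Good (T.filter fun u => 0 < a u) := by
    intro T hT hvT a ha hav hs
    refine ⟨(Finset.filter_subset _ _).trans hT, by simp [hvT, hav], a, by simp, ?_⟩
    rw [← hs]
    refine Finset.sum_subset (Finset.filter_subset _ _) fun u hu hu' => ?_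
    have : a u = 0 := by
      simp only [Finset.mem_filter, not_and, not_lt] at hu'
      exact le_antisymm (hu' hu) (ha u hu)
    simp [this]
  have hne : (W.powerset.filter Good).Nonempty := by
    obtain ⟨a, h1, h2, h3⟩ := hex
    have := key W subset_rfl hv a h1 h2 h3
    exact ⟨_, by simp only [Finset.mem_filter, Finset.mem_powerset]; exact ⟨this.1, this⟩⟩
  obtain ⟨T, hTm, hmin⟩ := Finset.exists_min_image _ Finset.card hne
  obtain ⟨-, hTW, hvT, a, ha, hs⟩ := Finset.mem_filter.mp hTm
  have hmin' : ∀ T', Good T' → T.card ≤ T'.card := fun T' h =>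
    hmin T' (by simp only [Finset.mem_filter, Finset.mem_powerset]; exact ⟨h.1, h⟩)
  have hA : 0 < ∑ u ∈ T, a u := Finset.sum_pos ha ⟨v, hvT⟩
  -- key claim
  have claim : ∀ ν : α → ℝ, ∑ u ∈ T, ν u • g u = 0 → ν v = 0 → ∀ u ∈ T, ν u ≤ 0 := by
    intro ν hν hνv
    by_contra hcon
    push Not at hcon
    obtain ⟨u1, hu1, hu1'⟩ := hcon
    have hne : (T.filter fun u => 0 < ν u).Nonempty := ⟨u1, by simp [hu1, hu1']⟩
    obtain ⟨u0, hu0, hm⟩ := Finset.exists_min_image _ (fun u => a u / ν u) hne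
    simp only [Finset.mem_filter] at hu0 hm
    set t := a u0 / ν u0 with ht
    have htpos : 0 < t := div_pos (ha u0 hu0.1) hu0.2
    have hnn : ∀ u ∈ T, 0 ≤ a u - t * ν u := by
      intro u hu
      by_cases h : 0 < ν u
      · have := hm u ⟨hu, h⟩
        rw [le_div_iff₀ h] at this
        linarith
      · have := ha u hu
        nlinarith [mul_nonneg htpos.le (neg_nonneg.mpr (not_lt.mp h))]
    have hG := key T hTW hvT (fun u => a u - t * ν u) hnn (by simp [hνv, ha v hvT]) (by
      simp only [sub_smul, mul_smul, Finset.sum_sub_distrib, ← Finset.smul_sum, hs, hν, smul_zero,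
        sub_zero])
    have h1 := hmin' _ hG
    have h2 : (T.filter fun u => 0 < a u - t * ν u).card < T.card := by
      apply Finset.card_lt_card
      refine Finset.filter_ssubset.mpr ⟨u0, hu0.1, ?_⟩
      rw [ht, div_mul_cancel₀ _ hu0.2.ne']
      simp
    omega
  refine ⟨T, hTW, hvT, fun u => a u / ∑ u ∈ T, a u, fun u hu => div_pos (ha u hu) hA, ?_, ?_, ?_⟩
  · rw [← Finset.sum_div, div_self hA.ne']
  · simp only [div_eq_inv_mul, mul_smul, ← Finset.smul_sum, hs, smul_zero]
  · intro μ hμ hμ0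
    set s := μ v / a v with hsdef
    have hav := ha v hvT
    have e1 : ∑ u ∈ T, (μ u - s * a u) • g u = 0 := by
      simp only [sub_smul, mul_smul, Finset.sum_sub_distrib, ← Finset.smul_sum, hs, hμ, smul_zero,
        sub_zero]
    have e2 : μ v - s * a v = 0 := by rw [hsdef, div_mul_cancel₀ _ hav.ne', sub_self]
    have c1 := claim (fun u => μ u - s * a u) e1 e2
    have c2 := claim (fun u => -(μ u - s * a u))
      (by simp only [neg_smul, Finset.sum_neg_distrib, e1, neg_zero]) (by simp [e2])
    have e3 : ∀ u ∈ T, μ u = s * a u := fun u hu => by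
      have h1 := c1 u hu
      have h2 := c2 u hu
      linarith
    have e4 : s = 0 := by
      rw [Finset.sum_congr rfl e3, ← Finset.mul_sum] at hμ0
      exact (mul_eq_zero.mp hμ0).resolve_right hA.ne'
    intro u hu
    rw [e3 u hu, e4, zero_mul]

theorem card_le_of_rigid {α : Type} [DecidableEq α] {k : ℕ} (g : α → Fin k → ℝ)
    (T : Finset α)
    (h : ∀ μ : α → ℝ, ∑ u ∈ T, μ u • g u = 0 → ∑ u ∈ T, μ u = 0 → ∀ u ∈ T, μ u = 0) :
    T.card ≤ k + 1 := by
  have hli : LinearIndependent ℝ (fun u : T => ((g u, 1) : (Fin k → ℝ) × ℝ)) := by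
    rw [Fintype.linearIndependent_iff]
    intro c hc u
    have h1 := congrArg Prod.fst hc
    have h2 := congrArg Prod.snd hc
    simp only [Prod.fst_sum, Prod.snd_sum, Prod.smul_mk, Prod.fst_zero, Prod.snd_zero,
      smul_eq_mul, mul_one] at h1 h2
    let μ : α → ℝ := fun u => if hu : u ∈ T then c ⟨u, hu⟩ else 0
    have hμ : ∀ u : T, μ u = c u := fun u => by simp [μ]
    have := h μ (by rw [← Finset.sum_coe_sort]; simpa only [hμ] using h1)
      (by rw [← Finset.sum_coe_sort]; simpa only [hμ] using h2) u u.2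
    rwa [hμ] at this
  have := hli.fintype_card_le_finrank
  simpa using this

theorem castZ_zero {k : ℕ} : castZ (0 : Fin k → ℤ) = 0 := by ext; simp [castZ]
theorem castZ_add {k : ℕ} (x y : Fin k → ℤ) : castZ (x + y) = castZ x + castZ y := by
  ext; simp [castZ]
theorem castZ_sub {k : ℕ} (x y : Fin k → ℤ) : castZ (x - y) = castZ x - castZ y := by
  ext; simp [castZ]
theorem castZ_smul {k : ℕ} (n : ℤ) (x : Fin k → ℤ) : castZ (n • x) = (n : ℝ) • castZ x := by
  ext; simp [castZ]
theorem castZ_sum {k : ℕ} {α : Type} (s : Finset α) (f : α → Fin k → ℤ) :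
    castZ (∑ u ∈ s, f u) = ∑ u ∈ s, castZ (f u) := by
  ext; simp [castZ, Finset.sum_apply]
theorem castZ_inj {k : ℕ} : Function.Injective (castZ : (Fin k → ℤ) → Fin k → ℝ) := by
  intro x y h
  ext i
  have := congrFun h i
  simpa [castZ] using this

/-- The polytope spanned by `W`. -/
def hullZ {k : ℕ} (W : Finset (Fin k → ℤ)) : Set (Fin k → ℝ) :=
  convexHull ℝ (castZ '' (W : Set (Fin k → ℤ)))

theorem hullZ_convex {k : ℕ} (W : Finset (Fin k → ℤ)) : Convex ℝ (hullZ W) := convex_convexHull _ _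

theorem mem_hullZ {k : ℕ} {W : Finset (Fin k → ℤ)} {u} (hu : u ∈ W) : castZ u ∈ hullZ W :=
  subset_convexHull _ _ ⟨u, hu, rfl⟩

theorem smul_mem_interior {E : Type} [AddCommGroup E] [Module ℝ E] [TopologicalSpace E]
    [IsTopologicalAddGroup E] [ContinuousSMul ℝ E] {P : Set E} (hP : Convex ℝ P)
    (h0 : (0 : E) ∈ interior P) {y : E} (hy : y ∈ P) {t : ℝ} (ht0 : 0 ≤ t) (ht1 : t < 1) :
    t • y ∈ interior P := by
  have := hP.combo_interior_self_mem_interior h0 hy (a := 1 - t) (b := t) (by linarith) ht0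
    (by ring)
  simpa using this

/-- Sub-convex combinations stay in a convex set containing zero. -/
theorem sum_smul_mem {α E : Type} [AddCommGroup E] [Module ℝ E] {P : Set E} (hP : Convex ℝ P)
    (h0 : (0 : E) ∈ P) (T : Finset α) (a : α → ℝ) (g : α → E) (ha : ∀ u ∈ T, 0 ≤ a u)
    (hs : ∑ u ∈ T, a u ≤ 1) (hg : ∀ u ∈ T, g u ∈ P) : ∑ u ∈ T, a u • g u ∈ P := by
  rcases (Finset.sum_nonneg ha).eq_or_lt with h | h
  · have : ∀ u ∈ T, a u = 0 := (Finset.sum_eq_zero_iff_of_nonneg ha).mp h.symm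
    rw [Finset.sum_congr rfl (fun u hu => by rw [this u hu, zero_smul])]
    simpa using h0
  · have h1 := hP.centerMass_mem ha h hg
    have h2 := hP h0 h1 (a := 1 - ∑ u ∈ T, a u) (b := ∑ u ∈ T, a u) (by linarith) h.le (by ring)
    rw [smul_zero, zero_add, Finset.centerMass, smul_smul, mul_inv_cancel₀ h.ne', one_smul] at h2
    exact h2

theorem asym (k m : ℕ) : ∃ c : ℝ, 0 < c ∧ ∀ W : Finset (Fin k → ℤ),
    (0 : Fin k → ℝ) ∈ interior (hullZ W) →
    (∀ S : Finset (Fin k → ℤ), (∀ s ∈ S, castZ s ∈ interior (hullZ W)) → S.card ≤ m) →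
    ∀ v ∈ W, (-c) • castZ v ∈ hullZ W := by
  classical
  obtain ⟨c, hc, hb⟩ := rigid_bound (k + 1) m
  refine ⟨c, hc, fun W h0 hS v hv => ?_⟩
  have hconv := hullZ_convex W
  have h0' : (0 : Fin k → ℝ) ∈ hullZ W := interior_subset h0
  -- initial representation
  have hex : ∃ a : (Fin k → ℤ) → ℝ, (∀ u ∈ W, 0 ≤ a u) ∧ 0 < a v ∧
      ∑ u ∈ W, a u • castZ u = 0 := by
    have hnear : ∃ ε : ℝ, 0 < ε ∧ (-ε) • castZ v ∈ hullZ W := by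
      have hcont : Filter.Tendsto (fun ε : ℝ => (-ε) • castZ v) (nhdsWithin 0 (Ioi 0)) (nhds 0) := by
        have : Continuous (fun ε : ℝ => (-ε) • castZ v) := by fun_prop
        have h := this.tendsto 0
        simp only [neg_zero, zero_smul] at h
        exact h.mono_left nhdsWithin_le_nhds
      have h1 := hcont.eventually (mem_interior_iff_mem_nhds.mp h0)
      obtain ⟨ε, h2, h3⟩ := (h1.and self_mem_nhdsWithin).exists
      exact ⟨ε, h3, h2⟩
    obtain ⟨ε, hε, hm⟩ := hnear
    have hm' : (-ε) • castZ v ∈ convexHull ℝ ((W.image castZ : Finset (Fin k → ℝ)) : Set (Fin k → ℝ)) := by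
      simpa [hullZ] using hm
    rw [Finset.mem_convexHull'] at hm'
    obtain ⟨w, hw0, hw1, hw2⟩ := hm'
    rw [Finset.sum_image (fun x _ y _ h => castZ_inj h)] at hw2
    refine ⟨fun u => w (castZ u) + if u = v then ε else 0, ?_, ?_, ?_⟩
    · intro u hu
      have := hw0 (castZ u) (Finset.mem_image_of_mem _ hu)
      dsimp only
      split_ifs <;> linarith
    · have := hw0 (castZ v) (Finset.mem_image_of_mem _ hv)
      simp only [if_true]
      linarith
    · simp only [add_smul, Finset.sum_add_distrib, hw2, ite_smul, zero_smul]
      rw [Finset.sum_ite_eq' W v]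
      simp [hv]
  obtain ⟨T, hTW, hvT, a, ha, hs1, hs0, hrig⟩ := min_rep castZ W v hv hex
  have hcard := card_le_of_rigid castZ T hrig
  -- rigidity
  have hR : Rigid m (fun u : T => a u) := by
    intro q hq p hp hpos
    let p' : (Fin k → ℤ) → ℤ := fun u => if hu : u ∈ T then p ⟨u, hu⟩ else 0
    have hp' : ∀ u : T, p' u = p u := fun u => by simp [p']
    have hsump : ∑ u ∈ T, p' u = q := by
      rw [← Finset.sum_coe_sort]; simpa only [hp'] using hp
    have hpos' : ∀ u ∈ T, ∀ j : ℕ, j ≤ m → 0 < a u + j * (q * a u - p' u) := by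
      intro u hu j hj
      have := hpos ⟨u, hu⟩ j hj
      simpa only [← hp'] using this
    set w : Fin k → ℤ := ∑ u ∈ T, p' u • u with hw
    have hμ : ∑ u ∈ T, (q * a u - p' u) • castZ u = - castZ w := by
      simp only [sub_smul, mul_smul, Finset.sum_sub_distrib, ← Finset.smul_sum, hs0, smul_zero,
        zero_sub, hw, castZ_sum, castZ_smul]
    have hμ1 : ∑ u ∈ T, (q * a u - p' u) = 0 := by
      rw [Finset.sum_sub_distrib, ← Finset.mul_sum, hs1]
      have : (∑ u ∈ T, (p' u : ℝ)) = q := by exact_mod_cast hsump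
      rw [this]; ring
    -- interior points
    have hint : ∀ j : ℕ, j ≤ m → castZ (-((j : ℤ) • w)) ∈ interior (hullZ W) := by
      intro j hj
      have hx : castZ (-((j : ℤ) • w)) = ∑ u ∈ T, (a u + j * (q * a u - p' u)) • castZ u := by
        simp only [add_smul, mul_smul, Finset.sum_add_distrib, ← Finset.smul_sum, hs0, hμ, zero_add]
        rw [← neg_smul, castZ_smul]; simp
      have hδ : ∃ δ : ℝ, 0 < δ ∧ δ < 1 ∧ ∀ u ∈ T, δ * a u ≤ a u + j * (q * a u - p' u) := by
        obtain ⟨u0, hu0, hmin⟩ := Finset.exists_min_image T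
          (fun u => (a u + j * (q * a u - p' u)) / a u) ⟨v, hvT⟩
        have h1 := div_pos (hpos' u0 hu0 j hj) (ha u0 hu0)
        refine ⟨min ((a u0 + j * (q * a u0 - p' u0)) / a u0) (1/2), lt_min h1 (by norm_num),
          (min_le_right _ _).trans_lt (by norm_num), fun u hu => ?_⟩
        have h2 := (min_le_left _ (1/2)).trans (hmin u hu)
        rwa [le_div_iff₀ (ha u hu)] at h2
      obtain ⟨δ, hδ0, hδ1, hδ⟩ := hδ
      have h1δ : 0 < 1 - δ := by linarith
      have hy : ∑ u ∈ T, ((a u + j * (q * a u - p' u) - δ * a u) / (1 - δ)) • castZ u ∈ hullZ W := by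
        apply sum_smul_mem hconv h0'
        · intro u hu
          exact div_nonneg (by linarith [hδ u hu]) h1δ.le
        · rw [← Finset.sum_div, Finset.sum_sub_distrib, Finset.sum_add_distrib, ← Finset.mul_sum,
            ← Finset.mul_sum, hμ1, hs1, div_le_one h1δ]
          linarith
        · exact fun u hu => mem_hullZ (hTW hu)
      have hyi := smul_mem_interior hconv h0 hy h1δ.le (by linarith)
      rw [hx]
      convert hyi using 1
      rw [Finset.smul_sum]
      simp only [smul_smul]
      simp only [mul_div_cancel₀ _ h1δ.ne', sub_smul, Finset.sum_sub_distrib]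
      simp only [mul_smul, ← Finset.smul_sum, hs0, smul_zero, sub_zero]
    have hw0 : w = 0 := by
      by_contra hne
      have hinj : Function.Injective (fun j : ℕ => -((j : ℤ) • w)) := by
        intro j1 j2 h
        simp only [neg_inj] at h
        exact_mod_cast smul_left_injective ℤ hne h
      have := hS ((Finset.range (m + 1)).image (fun j : ℕ => -((j : ℤ) • w))) (by
        intro s hs
        obtain ⟨j, hj, rfl⟩ := Finset.mem_image.mp hs
        exact hint j (by simpa [Nat.lt_succ_iff] using hj))
      rw [Finset.card_image_of_injective _ hinj, Finset.card_range] at this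
      omega
    rw [hw0, castZ_zero, neg_zero] at hμ
    intro u
    have := hrig _ hμ hμ1 u u.2
    simp only [hp'] at this
    linarith
  have hcv : c ≤ a v := hb T (by simpa using hcard) (fun u : T => a u) (fun u => ha u u.2)
    (by rw [Finset.sum_coe_sort T a]; exact hs1) hR ⟨v, hvT⟩
  have hav := ha v hvT
  have h1 : (-a v) • castZ v ∈ hullZ W := by
    have : (-a v) • castZ v = ∑ u ∈ T.erase v, a u • castZ u := by
      have := Finset.add_sum_erase T (fun u => a u • castZ u) hvT
      rw [hs0] at this
      rw [neg_smul, neg_eq_iff_add_eq_zero]; exact this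
    rw [this]
    apply sum_smul_mem hconv h0'
    · exact fun u hu => (ha u (Finset.mem_of_mem_erase hu)).le
    · rw [← hs1]
      exact Finset.sum_le_sum_of_subset_of_nonneg (Finset.erase_subset _ _)
        (fun u hu _ => (ha u hu).le)
    · exact fun u hu => mem_hullZ (hTW (Finset.mem_of_mem_erase hu))
  have h2 := hconv h0' h1 (a := 1 - c / a v) (b := c / a v)
    (by rw [sub_nonneg, div_le_one hav]; exact hcv) (by positivity) (by ring)
  rw [smul_zero, zero_add, smul_smul] at h2
  convert h2 using 2
  field_simp

theorem castZ_mulVec {k : ℕ} (B : Matrix (Fin k) (Fin k) ℤ) (z : Fin k → ℤ) :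
    castZ (B.mulVec z) = ∑ j, (z j : ℝ) • castZ (fun i => B i j) := by
  ext i
  simp only [castZ, Matrix.mulVec, dotProduct, Finset.sum_apply, Pi.smul_apply, smul_eq_mul]
  push_cast
  exact Finset.sum_congr rfl fun j _ => mul_comm _ _

theorem castZ_cramer {k : ℕ} (B : Matrix (Fin k) (Fin k) ℤ) (hB : B.det ≠ 0) (x : Fin k → ℤ) :
    castZ x = ∑ j, ((B.cramer x j : ℝ) / B.det) • castZ (fun i => B i j) := by
  have hD : (B.det : ℝ) ≠ 0 := by exact_mod_cast hB
  have h := congrArg castZ (Matrix.mulVec_cramer B x)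
  rw [castZ_mulVec, castZ_smul] at h
  have h2 := congrArg (fun y => (B.det : ℝ)⁻¹ • y) h
  simp only [smul_smul, inv_mul_cancel₀ hD, one_smul, Finset.smul_sum] at h2
  rw [← h2]
  exact Finset.sum_congr rfl fun j _ => by rw [div_eq_inv_mul]

theorem card_quot_eq {k : ℕ} (B : Matrix (Fin k) (Fin k) ℤ) (hB : B.det ≠ 0) :
    Nat.card ((Fin k → ℤ) ⧸ LinearMap.range B.mulVecLin) = B.det.natAbs := by
  have hinj : Function.Injective B.mulVecLin := by
    rw [← LinearMap.ker_eq_bot, LinearMap.ker_eq_bot']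
    intro x hx
    exact Matrix.eq_zero_of_mulVec_eq_zero hB hx
  have h := Submodule.natAbs_det_equiv (LinearMap.range B.mulVecLin)
    (LinearEquiv.ofInjective B.mulVecLin hinj)
  rw [← h, ← LinearMap.det_toLin']
  rfl

theorem det_bound (k m : ℕ) : ∃ M : ℕ, ∀ W : Finset (Fin k → ℤ),
    (0 : Fin k → ℝ) ∈ interior (hullZ W) →
    (∀ S : Finset (Fin k → ℤ), (∀ s ∈ S, castZ s ∈ interior (hullZ W)) → S.card ≤ m) →
    ∀ B : Matrix (Fin k) (Fin k) ℤ, (∀ j, (fun i => B i j) ∈ W) → B.det ≠ 0 →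
      B.det.natAbs ≤ M := by
  classical
  obtain ⟨c0, hc0, hasym⟩ := asym k m
  set c := min c0 1 with hcdef
  have hc : 0 < c := lt_min hc0 one_pos
  obtain ⟨N, hN⟩ := exists_nat_gt (2 * k / c)
  have hNpos : (0 : ℝ) < N := lt_of_le_of_lt (by positivity) hN
  refine ⟨N ^ k * m, fun W h0 hS B hcol hB => ?_⟩
  have hconv := hullZ_convex W
  have h0' : (0 : Fin k → ℝ) ∈ hullZ W := interior_subset h0
  have hneg : ∀ v ∈ W, ∀ s : ℝ, |s| = c → s • castZ v ∈ hullZ W := by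
    intro v hv s hs
    rcases eq_or_eq_neg_of_abs_eq hs with rfl | rfl
    · have := hconv h0' (mem_hullZ hv) (a := 1 - c) (b := c)
        (by linarith [min_le_right c0 1]) hc.le (by ring)
      simpa using this
    · have := hconv h0' (hasym W h0 hS v hv) (a := 1 - c / c0) (b := c / c0)
        (by rw [sub_nonneg, div_le_one hc0]; exact min_le_left _ _) (by positivity) (by ring)
      rw [smul_zero, zero_add, smul_smul] at this
      convert this using 2
      field_simp
  -- small combinations are interior
  have hsmall : ∀ t : Fin k → ℝ, (∀ j, |t j| ≤ 1 / N) →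
      ∑ j, t j • castZ (fun i => B i j) ∈ interior (hullZ W) := by
    intro t ht
    have hy : ∑ j, (2 * |t j| / c) • ((if 0 ≤ t j then c else -c) • castZ (fun i => B i j))
        ∈ hullZ W := by
      apply sum_smul_mem hconv h0'
      · intro j _
        positivity
      · calc ∑ j, 2 * |t j| / c ≤ ∑ j : Fin k, 2 * (1 / N) / c := by
              apply Finset.sum_le_sum
              intro j _
              have := ht j
              gcongr
          _ = (2 * k / c) / N := by simp; ring
          _ ≤ 1 := by rw [div_le_one hNpos]; exact hN.le
      · intro j _
        apply hneg _ (hcol j)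
        split_ifs
        · exact abs_of_pos hc
        · rw [abs_neg]; exact abs_of_pos hc
    have := smul_mem_interior hconv h0 hy (t := 1 / 2) (by norm_num) (by norm_num)
    convert this using 1
    rw [Finset.smul_sum]
    refine Finset.sum_congr rfl fun j _ => ?_
    rw [smul_smul, smul_smul]
    congr 1
    split_ifs with h
    · rw [abs_of_nonneg h]; field_simp
    · rw [abs_of_neg (not_le.mp h)]; field_simp
  by_contra hcon
  push Not at hcon
  set Λ := LinearMap.range B.mulVecLin with hΛ
  have hcardQ := card_quot_eq B hB
  have hfinQ : Finite ((Fin k → ℤ) ⧸ Λ) := by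
    apply Nat.finite_of_card_ne_zero
    rw [hcardQ]
    exact Int.natAbs_ne_zero.mpr hB
  let _ := Fintype.ofFinite ((Fin k → ℤ) ⧸ Λ)
  let x : ((Fin k → ℤ) ⧸ Λ) → (Fin k → ℤ) := Function.surjInv Λ.mkQ_surjective
  have hx : ∀ g, Λ.mkQ (x g) = g := Function.surjInv_eq Λ.mkQ_surjective
  let lam : (Fin k → ℤ) → Fin k → ℝ := fun y j => (B.cramer y j : ℝ) / B.det
  have hfl : ∀ r : ℝ, ⌊Int.fract r * N⌋₊ < N := by
    intro r
    rw [Nat.floor_lt (by have := Int.fract_nonneg r; positivity)]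
    have := Int.fract_lt_one r
    nlinarith
  let f : ((Fin k → ℤ) ⧸ Λ) → (Fin k → Fin N) := fun g j =>
    ⟨⌊Int.fract (lam (x g) j) * N⌋₊, hfl _⟩
  have hlt : Fintype.card (Fin k → Fin N) * m < Fintype.card ((Fin k → ℤ) ⧸ Λ) := by
    rw [← Nat.card_eq_fintype_card (α := (Fin k → ℤ) ⧸ Λ), hcardQ]
    simpa using hcon
  obtain ⟨cell, hcell⟩ := Fintype.exists_lt_card_fiber_of_mul_lt_card f hlt
  set F := Finset.univ.filter (fun g => f g = cell) with hF
  obtain ⟨g0, hg0⟩ : F.Nonempty := Finset.card_pos.mp (by omega)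
  let y : ((Fin k → ℤ) ⧸ Λ) → (Fin k → ℤ) := fun g => x g - x g0 -
    B.mulVec (fun j => ⌊lam (x g) j⌋ - ⌊lam (x g0) j⌋)
  have hymk : ∀ g, Λ.mkQ (y g) = g - g0 := by
    intro g
    have : Λ.mkQ (B.mulVec (fun j => ⌊lam (x g) j⌋ - ⌊lam (x g0) j⌋)) = 0 := by
      rw [Submodule.mkQ_apply, Submodule.Quotient.mk_eq_zero]
      exact ⟨_, rfl⟩
    simp only [y, map_sub, this, hx, sub_zero]
  have hyinj : Function.Injective y := by
    intro g1 g2 h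
    have := congrArg Λ.mkQ h
    rw [hymk, hymk] at this
    exact sub_left_injective this
  have hyint : ∀ g ∈ F, castZ (y g) ∈ interior (hullZ W) := by
    intro g hg
    have e : castZ (y g) = ∑ j, (Int.fract (lam (x g) j) - Int.fract (lam (x g0) j)) •
        castZ (fun i => B i j) := by
      simp only [y, castZ_sub, castZ_mulVec]
      rw [castZ_cramer B hB (x g), castZ_cramer B hB (x g0), ← Finset.sum_sub_distrib,
        ← Finset.sum_sub_distrib]
      refine Finset.sum_congr rfl fun j _ => ?_
      rw [← sub_smul, ← sub_smul]
      congr 1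
      simp only [lam, Int.fract]
      push_cast
      ring
    rw [e]
    apply hsmall
    intro j
    have h1 : ⌊Int.fract (lam (x g) j) * N⌋₊ = ⌊Int.fract (lam (x g0) j) * N⌋₊ := by
      have h1 := (Finset.mem_filter.mp hg).2
      have h2 := (Finset.mem_filter.mp hg0).2
      have := congrFun (h1.trans h2.symm) j
      simpa [f] using this
    have hx := Int.fract_nonneg (lam (x g) j)
    have hy := Int.fract_nonneg (lam (x g0) j)
    have h2 := Nat.floor_le (mul_nonneg hx hNpos.le)
    have h3 := Nat.lt_floor_add_one (Int.fract (lam (x g) j) * N)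
    have h4 := Nat.floor_le (mul_nonneg hy hNpos.le)
    have h5 := Nat.lt_floor_add_one (Int.fract (lam (x g0) j) * N)
    rw [h1] at h2 h3
    rw [abs_le, le_div_iff₀ hNpos, neg_le, le_div_iff₀ hNpos]
    constructor <;> nlinarith
  have hfinal := hS (F.image y) (by
    intro s hs
    obtain ⟨g, hg, rfl⟩ := Finset.mem_image.mp hs
    exact hyint g hg)
  rw [Finset.card_image_of_injective _ hyinj] at hfinal
  omega

theorem exists_basis_cols {k : ℕ} (W : Finset (Fin k → ℤ))
    (h0 : (interior (hullZ W)).Nonempty) :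
    ∃ B : Matrix (Fin k) (Fin k) ℤ, (∀ j, (fun i => B i j) ∈ W) ∧ B.det ≠ 0 := by
  have hspan : Submodule.span ℝ (castZ '' (W : Set (Fin k → ℤ))) = ⊤ := by
    apply Submodule.eq_top_of_nonempty_interior'
    refine h0.mono (interior_mono ?_)
    exact convexHull_min Submodule.subset_span (Submodule.convex _)
  obtain ⟨f, hf, -, hli⟩ := Submodule.exists_fun_fin_finrank_span_eq ℝ
    (castZ '' (W : Set (Fin k → ℤ)))
  have hk : Module.finrank ℝ (Submodule.span ℝ (castZ '' (W : Set (Fin k → ℤ)))) = k := by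
    rw [hspan]; simp
  choose u hu huf using hf
  let e := finCongr hk.symm
  refine ⟨fun i j => u (e j) i, fun j => hu (e j), ?_⟩
  have hli' : LinearIndependent ℝ (fun j => f (e j)) := hli.comp e e.injective
  set B : Matrix (Fin k) (Fin k) ℤ := fun i j => u (e j) i with hBdef
  have hcol : (B.map (fun z : ℤ => (z : ℝ))).col = fun j => f (e j) := by
    funext j
    rw [← huf (e j)]
    rfl
  have hunit : IsUnit (B.map (fun z : ℤ => (z : ℝ))) := by
    rw [← Matrix.linearIndependent_cols_iff_isUnit, hcol]
    exact hli'
  rw [Matrix.isUnit_iff_isUnit_det, isUnit_iff_ne_zero] at hunit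
  intro h
  apply hunit
  have := RingHom.map_det (Int.castRingHom ℝ) B
  rw [h] at this
  simpa using this.symm

theorem normal_form (k m : ℕ) : ∃ M : ℕ, ∀ W : Finset (Fin k → ℤ),
    (0 : Fin k → ℝ) ∈ interior (hullZ W) →
    (∀ S : Finset (Fin k → ℤ), (∀ s ∈ S, castZ s ∈ interior (hullZ W)) → S.card ≤ m) →
    ∃ B : Matrix (Fin k) (Fin k) ℤ, B.det ≠ 0 ∧ |B.det| ≤ M ∧
      ∀ u ∈ W, ∀ i, |B.cramer u i| ≤ M := by
  classical
  obtain ⟨M, hM⟩ := det_bound k m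
  refine ⟨M, fun W h0 hS => ?_⟩
  obtain ⟨B0, hB0, hdet0⟩ := exists_basis_cols W ⟨0, h0⟩
  obtain ⟨g, hg, hmax⟩ := Finset.exists_max_image (Fintype.piFinset fun _ : Fin k => W)
    (fun g => (Matrix.of g).transpose.det.natAbs)
    ⟨fun j i => B0 i j, by simpa using hB0⟩
  set B : Matrix (Fin k) (Fin k) ℤ := (Matrix.of g).transpose with hBdef
  have hgW : ∀ j, g j ∈ W := by simpa using hg
  have hdet : B.det ≠ 0 := by
    have h1 := hmax (fun j i => B0 i j) (by simpa using hB0)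
    have h2 : (Matrix.of (fun j i => B0 i j)).transpose = B0 := rfl
    rw [h2] at h1
    intro h
    have h3 := Int.natAbs_pos.mpr hdet0
    rw [h] at h1
    simp at h1
    exact hdet0 h1
  have hle : B.det.natAbs ≤ M := hM W h0 hS B hgW hdet
  have habs : ∀ z : ℤ, z.natAbs ≤ M → |z| ≤ M := by intro z hz; rw [Int.abs_eq_natAbs]; exact_mod_cast hz
  refine ⟨B, hdet, habs _ hle, fun u hu i => habs _ ?_⟩
  rw [Matrix.cramer_apply]
  have h1 := hmax (Function.update g i u) (by
    rw [Fintype.mem_piFinset]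
    intro j
    by_cases hj : j = i
    · subst hj; simpa using hu
    · simpa [hj] using hgW j)
  have h2 : (Matrix.of (Function.update g i u)).transpose = B.updateCol i u := by
    ext a b
    by_cases hb : b = i
    · subst hb; simp
    · simp [hb, hBdef]
  rw [h2] at h1
  exact h1.trans hle

/-- The real affine map of an integral affine map. -/
def affR {k : ℕ} (A : Matrix (Fin k) (Fin k) ℤ) (b : Fin k → ℤ) :
    (Fin k → ℝ) →ᵃ[ℝ] (Fin k → ℝ) :=
  (Matrix.toLin' (A.map (fun z : ℤ => (z : ℝ)))).toAffineMap + AffineMap.const ℝ _ (castZ b)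

theorem affR_apply {k : ℕ} (A : Matrix (Fin k) (Fin k) ℤ) (b : Fin k → ℤ) (x : Fin k → ℝ) :
    affR A b x = fun i => (∑ j, (A i j : ℝ) * x j) + (b i : ℝ) := by
  ext i
  simp [affR, castZ, Matrix.mulVec, dotProduct]

theorem affR_castZ {k : ℕ} (A : Matrix (Fin k) (Fin k) ℤ) (b u : Fin k → ℤ) :
    affR A b (castZ u) = castZ (A.mulVec u + b) := by
  rw [affR_apply]
  ext i
  simp [castZ, Matrix.mulVec, dotProduct]

theorem hullZ_image {k : ℕ} (A : Matrix (Fin k) (Fin k) ℤ) (b : Fin k → ℤ)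
    (V : Finset (Fin k → ℤ)) :
    hullZ (V.image fun u => A.mulVec u + b) = affR A b '' hullZ V := by
  unfold hullZ
  rw [AffineMap.image_convexHull, Finset.coe_image, Set.image_image, Set.image_image]
  simp only [affR_castZ]

/-- Finite invariants attached to a polytope. -/
def HasData (k : ℕ) (P : Set (Fin k → ℝ))
    (δ : ℤ × (Fin k → Fin k → ℤ) × Finset (Fin k → ℤ)) : Prop :=
  ∃ (V : Finset (Fin k → ℤ)) (x0 : Fin k → ℤ) (B : Matrix (Fin k) (Fin k) ℤ),
    P = hullZ V ∧ B.det ≠ 0 ∧ δ.1 = B.det ∧ (δ.2.1 = fun i j => B i j % B.det) ∧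
      δ.2.2 = V.image (fun u => B.cramer (u - x0))

theorem latEquiv_of_data {k : ℕ} {P Q : Set (Fin k → ℝ)}
    {δ : ℤ × (Fin k → Fin k → ℤ) × Finset (Fin k → ℤ)} (hP : HasData k P δ) (hQ : HasData k Q δ) :
    LatEquiv k P Q := by
  classical
  obtain ⟨V, x0, B, hPV, hB, h1, h2, h3⟩ := hP
  obtain ⟨V', x0', B', hQV, hB', h1', h2', h3'⟩ := hQ
  have hd : B'.det = B.det := h1'.symm.trans h1
  have hmod : ∀ i j, B i j % B.det = B' i j % B.det := by
    intro i j
    have := congrFun (congrFun (h2.symm.trans h2') i) j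
    rwa [hd] at this
  have hdvd : ∀ i j, ∃ c, B' i j - B i j = B.det * c := fun i j =>
    Int.ModEq.dvd (hmod i j)
  choose C hC using hdvd
  let A : Matrix (Fin k) (Fin k) ℤ := 1 + Matrix.of C * B.adjugate
  have hAB : A * B = B' := by
    simp only [A, add_mul, one_mul, Matrix.mul_assoc, Matrix.adjugate_mul]
    rw [Matrix.mul_smul, Matrix.mul_one]
    ext i j
    have := hC i j
    simp only [Matrix.add_apply, Matrix.smul_apply, Matrix.of_apply, smul_eq_mul]
    linarith
  have hA : A.det = 1 := by
    have := congrArg Matrix.det hAB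
    rw [Matrix.det_mul, hd] at this
    exact mul_right_cancel₀ hB (by rw [this, one_mul])
  have hcr : ∀ u u' : Fin k → ℤ, B'.cramer (u' - x0') = B.cramer (u - x0) →
      u' = A.mulVec u + (x0' - A.mulVec x0) := by
    intro u u' h
    have e1 := Matrix.mulVec_cramer B' (u' - x0')
    have e2 := Matrix.mulVec_cramer B (u - x0)
    rw [h, ← hAB, ← Matrix.mulVec_mulVec, e2, hAB, hd, Matrix.mulVec_smul] at e1
    have e3 := smul_right_injective _ hB e1
    rw [Matrix.mulVec_sub] at e3
    have : u' = (u' - x0') + x0' := by abel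
    rw [this, ← e3]; abel
  have hV' : V' = V.image fun u => A.mulVec u + (x0' - A.mulVec x0) := by
    have hS := h3.symm.trans h3'
    ext w
    constructor
    · intro hw
      have : B'.cramer (w - x0') ∈ V.image (fun u => B.cramer (u - x0)) := by
        rw [hS]; exact Finset.mem_image_of_mem (fun u => B'.cramer (u - x0')) hw
      obtain ⟨u, hu, hu'⟩ := Finset.mem_image.mp this
      exact Finset.mem_image.mpr ⟨u, hu, (hcr u w hu'.symm).symm⟩
    · intro hw
      obtain ⟨u, hu, rfl⟩ := Finset.mem_image.mp hw
      have : B.cramer (u - x0) ∈ V'.image (fun u => B'.cramer (u - x0')) := by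
        rw [← hS]; exact Finset.mem_image_of_mem (fun u => B.cramer (u - x0)) hu
      obtain ⟨u', hu', hu''⟩ := Finset.mem_image.mp this
      rw [← hcr u u' hu'']; exact hu'
  refine ⟨A, A.adjugate, by rw [Matrix.mul_adjugate, hA, one_smul],
    by rw [Matrix.adjugate_mul, hA, one_smul], x0' - A.mulVec x0, ?_⟩
  rw [hQV, hV', hullZ_image, hPV]
  exact Set.image_congr fun x _ => affR_apply _ _ x

theorem exists_data (k m : ℕ) (hm : 1 ≤ m) :
    ∃ 𝓕 : Finset (ℤ × (Fin k → Fin k → ℤ) × Finset (Fin k → ℤ)),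
      ∀ P : Set (Fin k → ℝ), IsLatticePolytope k P → (interior P ∩ latPts k).ncard = m →
        ∃ δ ∈ 𝓕, HasData k P δ := by
  classical
  obtain ⟨M, hM⟩ := normal_form k m
  let I : Finset ℤ := Finset.Icc (-(M : ℤ)) M
  refine ⟨I ×ˢ (Fintype.piFinset fun _ => Fintype.piFinset fun _ => I) ×ˢ
    (Fintype.piFinset fun _ => I).powerset, ?_⟩
  rintro P ⟨V, hPV, -⟩ hcard
  change P = hullZ V at hPV
  have hfin : (interior P ∩ latPts k).Finite := Set.finite_of_ncard_pos (by omega)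
  obtain ⟨_, hx0, ⟨x0, rfl⟩⟩ := Set.nonempty_of_ncard_ne_zero
    (s := interior P ∩ latPts k) (by omega)
  change castZ x0 ∈ interior P at hx0
  set W : Finset (Fin k → ℤ) := V.image fun u => u - x0 with hW
  have hWP : hullZ W = Homeomorph.subRight (castZ x0) '' P := by
    have : W = V.image fun u => (1 : Matrix (Fin k) (Fin k) ℤ).mulVec u + (-x0) := by
      simp [hW, sub_eq_add_neg]
    rw [this, hullZ_image, hPV]
    refine Set.image_congr fun x _ => ?_
    rw [affR_apply]
    ext i
    simp [Matrix.one_apply, castZ, sub_eq_add_neg]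
  have hint : interior (hullZ W) = Homeomorph.subRight (castZ x0) '' interior P := by
    rw [hWP, Homeomorph.image_interior]
  have hint' : ∀ x : Fin k → ℝ, x ∈ interior (hullZ W) ↔ x + castZ x0 ∈ interior P := by
    intro x
    rw [hint]
    constructor
    · rintro ⟨y, hy, rfl⟩
      simpa using hy
    · intro h
      exact ⟨_, h, by simp⟩
  obtain ⟨B, hB, hBM, hcr⟩ := hM W ((hint' 0).mpr (by simpa using hx0)) (by
    intro S hS
    have h1 : ((S.image fun s => castZ (s + x0) : Finset (Fin k → ℝ)) : Set (Fin k → ℝ)) ⊆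
        interior P ∩ latPts k := by
      intro y hy
      obtain ⟨s, hs, rfl⟩ := Finset.mem_image.mp (Finset.mem_coe.mp hy)
      refine ⟨?_, ⟨s + x0, rfl⟩⟩
      have := (hint' _).mp (hS s hs)
      rwa [castZ_add]
    have h2 := Set.ncard_le_ncard h1 hfin
    rw [Set.ncard_coe_finset, hcard, Finset.card_image_of_injective _
      (fun a b h => add_left_injective x0 (castZ_inj h))] at h2
    exact h2)
  refine ⟨(B.det, fun i j => B i j % B.det, V.image (fun u => B.cramer (u - x0))), ?_,
    V, x0, B, hPV, hB, rfl, rfl, rfl⟩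
  simp only [Finset.mem_product, Fintype.mem_piFinset, Finset.mem_powerset, I, Finset.mem_Icc]
  refine ⟨abs_le.mp hBM, fun i j => ?_, ?_⟩
  · have h1 := Int.emod_nonneg (B i j) hB
    have h2 := Int.emod_lt_abs (B i j) hB
    constructor <;> linarith
  · intro z hz
    obtain ⟨u, hu, rfl⟩ := Finset.mem_image.mp hz
    simp only [Fintype.mem_piFinset, Finset.mem_Icc]
    exact fun i => abs_le.mp (hcr (u - x0) (Finset.mem_image_of_mem _ hu) i)

/-- For any `k, m ≥ 1` there are only finitely many convex lattice polytopes of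
dimension `k` with exactly `m` interior lattice points, up to lattice isomorphism. -/
theorem finitely_many_polytopes_with_m_interior_points (k m : ℕ) (hk : 1 ≤ k) (hm : 1 ≤ m) :
    ∃ (n : ℕ) (reps : Fin n → Set (Fin k → ℝ)),
      ∀ P : Set (Fin k → ℝ), IsLatticePolytope k P →
        (interior P ∩ latPts k).ncard = m →
        ∃ i, LatEquiv k P (reps i) := by
  classical
  obtain ⟨F, hF⟩ := exists_data k m hm
  let rep : (ℤ × (Fin k → Fin k → ℤ) × Finset (Fin k → ℤ)) → Set (Fin k → ℝ) := fun δ =>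
    if h : ∃ Q, HasData k Q δ then h.choose else ∅
  refine ⟨F.card, fun i => rep (F.equivFin.symm i), fun P hP hc => ?_⟩
  obtain ⟨δ, hδ, hd⟩ := hF P hP hc
  refine ⟨F.equivFin ⟨δ, hδ⟩, ?_⟩
  have hex : ∃ Q, HasData k Q δ := ⟨P, hd⟩
  simp only [Equiv.symm_apply_apply, rep, dif_pos hex]
  exact latEquiv_of_data hd hex.choose_spec
end
end

section
/- Every lattice-free tetrahedron in ℝ^3 has lattice width 1 (White's theorem): if T is a tetrahedron with vertices in ℤ^3 containing no lattice points other than its four vertices, then there is a linear functional φ with integer coefficients taking exactly two values on the vertices of T, differing by 1. -/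
open Set

noncomputable section

theorem white_sub (n b c m k0 : ℤ) (hn : 0 < n) (hk0 : 2 ≤ k0)
    (hc : 0 < c) (hm : 0 < m) (h2m : 2 * m < n) (hlt : (k0 - 1) * m < n) (hb : n ≤ k0 * b)
    (h : ∀ k : ℤ, 1 ≤ k → k < n → k * b / n + k * c / n = k * m / n) :
    ∀ k : ℕ, (k : ℤ) < n → k * c < n := by
  intro k
  induction k with
  | zero => intro _; simpa using hn
  | succ k ih =>
    intro hk
    push_cast at hk ⊢
    have ih := ih (by linarith)
    by_contra hcon
    push Not at hcon
    have div0 : ∀ t : ℤ, 0 ≤ t → t ≤ k → t * c / n = 0 := by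
      intro t h0 ht
      apply Int.ediv_eq_zero_of_lt (by positivity)
      nlinarith
    have hc1 : 1 ≤ ((k:ℤ) + 1) * c / n := by
      rw [Int.le_ediv_iff_mul_le hn]; linarith
    have hck2 : 1 ≤ ((k:ℤ) + 2) * c / n := by
      rw [Int.le_ediv_iff_mul_le hn]; linarith
    -- k is positive
    have hkpos : 1 ≤ (k:ℤ) := by
      by_contra h0
      have h0 : (k:ℤ) = 0 := by omega
      rw [h0] at hc1 hk
      have := h 1 le_rfl (by linarith)
      have h3 : (1:ℤ) * m / n = 0 := Int.ediv_eq_zero_of_lt (by linarith) (by linarith)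
      have h4 : 0 ≤ (1:ℤ) * b / n := Int.ediv_nonneg (by nlinarith) hn.le
      norm_num at *
      linarith
    have hbpos : 0 < b := by nlinarith
    set j := (k:ℤ) * m / n with hj
    have hj0 : 0 ≤ j := Int.ediv_nonneg (by positivity) hn.le
    have hjlt : (k:ℤ) * m < (j + 1) * n := by
      have := Int.lt_ediv_add_one_mul_self ((k:ℤ) * m) hn
      simpa [hj] using this
    have e1 := h k hkpos (by linarith)
    rw [div0 k (by linarith) le_rfl] at e1
    have e2 := h (k+1) (by linarith) hk
    have hbm : (k:ℤ) * b / n ≤ (k+1) * b / n := Int.ediv_le_ediv hn (by nlinarith)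
    have hm1 : j + 1 ≤ (k+1) * m / n := by linarith
    rw [Int.le_ediv_iff_mul_le hn] at hm1
    -- not the last
    have hk2 : (k:ℤ) + 2 < n := by
      by_contra hh
      have hh : (k:ℤ) = n - 2 := by omega
      rw [hh] at hjlt hm1
      have : m < j + 2 := by nlinarith
      have : j + 1 < m := by nlinarith
      omega
    have hk0k : k0 ≤ k + 1 := by
      by_contra hh
      have : (k:ℤ) + 1 ≤ k0 - 1 := by omega
      nlinarith
    have hmt : j * n ≤ (k + 2 - k0) * m := by nlinarith
    rw [← Int.le_ediv_iff_mul_le hn] at hmt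
    have e3 := h (k + 2 - k0) (by linarith) (by linarith)
    rw [div0 _ (by linarith) (by linarith)] at e3
    have hb3 : j ≤ (k + 2 - k0) * b / n := by linarith
    rw [Int.le_ediv_iff_mul_le hn] at hb3
    have hb4 : (j + 1) * n ≤ (k + 2) * b := by nlinarith
    rw [← Int.le_ediv_iff_mul_le hn] at hb4
    have e4 := h (k + 2) (by linarith) hk2
    have hm5 : j + 2 ≤ (k + 2) * m / n := by linarith
    rw [Int.le_ediv_iff_mul_le hn] at hm5
    nlinarith

theorem white_sub1 (n b c m k0 : ℤ) (hn : 0 < n) (hk0 : 2 ≤ k0)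
    (hc : 0 < c) (hm : 0 < m) (h2m : 2 * m < n) (hlt : (k0 - 1) * m < n) (hb : n ≤ k0 * b)
    (h : ∀ k : ℤ, 1 ≤ k → k < n → k * b / n + k * c / n = k * m / n) : c = 1 := by
  have := white_sub n b c m k0 hn hk0 hc hm h2m hlt hb h (n-1).toNat
  rw [Int.toNat_of_nonneg (by linarith)] at this
  have := this (by linarith)
  by_contra hne
  have : 2 ≤ c := by omega
  nlinarith

theorem white_core2 (n b c m : ℤ) (hb : 0 < b) (hc : 0 < c) (hm : m = b + c - 1)
    (h2m : 2 * m < n)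
    (h : ∀ k : ℤ, 1 ≤ k → k < n → k * b / n + k * c / n = k * m / n) : b = 1 ∨ c = 1 := by
  by_cases hm1 : m = 1
  · left; omega
  have hm2 : 2 ≤ m := by omega
  have hn : 0 < n := by linarith
  set k0 := (n - 1) / m + 1 with hk0
  have h1 : n ≤ k0 * m := by
    have := Int.lt_ediv_add_one_mul_self (n - 1) (by linarith : 0 < m)
    linarith
  have h2 : (k0 - 1) * m < n := by
    have := Int.ediv_mul_le (n - 1) (by linarith : m ≠ 0)
    have e : k0 - 1 = (n-1)/m := by omega
    rw [e]; linarith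
  have h3 : 2 ≤ k0 := by nlinarith
  have h4 : k0 < n := by nlinarith
  have e := h k0 (by linarith) h4
  have h5 : 1 ≤ k0 * m / n := by rw [Int.le_ediv_iff_mul_le hn]; linarith
  by_cases hbb : n ≤ k0 * b
  · right; exact white_sub1 n b c m k0 hn h3 hc (by linarith) h2m h2 hbb h
  · left
    refine white_sub1 n c b m k0 hn h3 hb (by linarith) h2m h2 ?_
      (fun k h1 h2 => by rw [← h k h1 h2, add_comm])
    have : k0 * b / n = 0 := Int.ediv_eq_zero_of_lt (by positivity) (by linarith)
    rw [this, zero_add] at e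
    rw [← e, Int.le_ediv_iff_mul_le hn] at h5
    linarith

theorem white_core1 (n a b c : ℤ) (ha : 0 < a) (hb : 0 < b) (hc : 0 < c)
    (hs : a + b + c = n + 1) (h2a : n < 2 * a)
    (hna : ∀ k : ℤ, 1 ≤ k → k < n → k * a % n ≠ 0)
    (h : ∀ k : ℤ, 1 ≤ k → k < n → k * a / n + k * b / n + k * c / n = k - 1) :
    b = 1 ∨ c = 1 := by
  refine white_core2 n b c (n - a) hb hc (by linarith) (by linarith) ?_
  intro k h1 h2
  have hn : 0 < n := by linarith
  have e := h k h1 h2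
  have : k * (n - a) / n = k - 1 - k * a / n := by
    have q := Int.mul_ediv_add_emod (k * a) n
    have p := Int.emod_nonneg (k * a) hn.ne'
    have p2 := Int.emod_lt_of_pos (k * a) hn
    have p3 := hna k h1 h2
    have p4 : 0 < k * a % n := by omega
    apply le_antisymm
    · rw [← Int.lt_add_one_iff, Int.ediv_lt_iff_lt_mul hn]; nlinarith
    · rw [Int.le_ediv_iff_mul_le hn]; nlinarith
  linarith

theorem white_core (n a b c : ℤ) (hn : 0 < n)
    (hna : ∀ k : ℤ, 1 ≤ k → k < n → k * a % n ≠ 0)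
    (hnb : ∀ k : ℤ, 1 ≤ k → k < n → k * b % n ≠ 0)
    (hnc : ∀ k : ℤ, 1 ≤ k → k < n → k * c % n ≠ 0)
    (h : ∀ k : ℤ, 1 ≤ k → k < n → k * a % n + k * b % n + k * c % n + (-k) % n = 2 * n) :
    n ∣ a - 1 ∨ n ∣ b - 1 ∨ n ∣ c - 1 := by
  by_cases hn1 : n = 1
  · left; rw [hn1]; exact one_dvd _
  -- reduce
  have red : ∀ a : ℤ, ∀ k, k * (a % n) % n = k * a % n := fun a k => by
    simp [Int.mul_emod]
  have fin : ∀ a : ℤ, a % n = 1 → n ∣ a - 1 := fun a h => by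
    rw [← h]; exact Int.dvd_self_sub_emod
  suffices a % n = 1 ∨ b % n = 1 ∨ c % n = 1 by
    rcases this with h | h | h
    · exact Or.inl (fin _ h)
    · exact Or.inr (Or.inl (fin _ h))
    · exact Or.inr (Or.inr (fin _ h))
  have pos : ∀ a : ℤ, (∀ k : ℤ, 1 ≤ k → k < n → k * a % n ≠ 0) → 0 < a % n := fun a h => by
    have := h 1 le_rfl (by omega)
    have := Int.emod_nonneg a hn.ne'
    rw [one_mul] at *
    omega
  have ha := pos a hna
  have hb := pos b hnb
  have hc := pos c hnc
  simp only [← red a] at hna h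
  simp only [← red b] at hnb h
  simp only [← red c] at hnc h
  have la := Int.emod_lt_of_pos a hn
  have lb := Int.emod_lt_of_pos b hn
  have lc := Int.emod_lt_of_pos c hn
  generalize a % n = a at *
  generalize b % n = b at *
  generalize c % n = c at *
  have negm : ∀ k : ℤ, 1 ≤ k → k < n → (-k) % n = n - k := fun k h1 h2 => by
    rw [← Int.add_emod_right, Int.emod_eq_of_lt (by linarith) (by linarith)]; ring
  have hs : a + b + c = n + 1 := by
    have := h 1 le_rfl (by omega)
    rw [negm 1 le_rfl (by omega)] at this
    simp only [one_mul] at this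
    rw [Int.emod_eq_of_lt ha.le la, Int.emod_eq_of_lt hb.le lb, Int.emod_eq_of_lt hc.le lc] at this
    linarith
  have hf : ∀ k : ℤ, 1 ≤ k → k < n → k * a / n + k * b / n + k * c / n = k - 1 := by
    intro k h1 h2
    have e := h k h1 h2
    rw [negm k h1 h2] at e
    have qa := Int.mul_ediv_add_emod (k * a) n
    have qb := Int.mul_ediv_add_emod (k * b) n
    have qc := Int.mul_ediv_add_emod (k * c) n
    have : n * (k * a / n + k * b / n + k * c / n) = n * (k - 1) := by
      have : k * (a + b + c) = k * (n + 1) := by rw [hs]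
      linarith
    exact mul_left_cancel₀ hn.ne' this
  by_cases hn2 : n = 2
  · left; omega
  have h2 := hf 2 (by norm_num) (by omega)
  have ne : ∀ a : ℤ, (∀ k : ℤ, 1 ≤ k → k < n → k * a % n ≠ 0) → n ≠ 2 * a := by
    intro a h e
    have := h 2 (by norm_num) (by omega)
    rw [← e] at this
    simp at this
  have na := ne a hna
  have nb := ne b hnb
  have nc := ne c hnc
  by_cases a2 : n < 2 * a
  · right
    exact white_core1 n a b c ha hb hc hs a2 hna hf
  by_cases b2 : n < 2 * b
  · have := white_core1 n b a c hb ha hc (by linarith) b2 hnb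
      (fun k h1 h2 => by rw [← hf k h1 h2]; ring)
    tauto
  by_cases c2 : n < 2 * c
  · have := white_core1 n c a b hc ha hb (by linarith) c2 hnc
      (fun k h1 h2 => by rw [← hf k h1 h2]; ring)
    tauto
  exfalso
  rw [Int.ediv_eq_zero_of_lt (by linarith) (by omega), Int.ediv_eq_zero_of_lt (by linarith) (by omega),
    Int.ediv_eq_zero_of_lt (by linarith) (by omega)] at h2
  norm_num at h2

/-- All residues vanish, or none vanish and they sum to `2N`. -/
theorem white_two (N p q r : ℤ) (hN : 0 < N)
    (h1 : p % N + q % N + r % N + (-(p + q + r)) % N ≠ N)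
    (h2 : (-p) % N + (-q) % N + (-r) % N + (p + q + r) % N ≠ N) :
    (N ∣ p ∧ N ∣ q ∧ N ∣ r) ∨
    (p % N ≠ 0 ∧ q % N ≠ 0 ∧ r % N ≠ 0 ∧ (-(p + q + r)) % N ≠ 0 ∧
      p % N + q % N + r % N + (-(p + q + r)) % N = 2 * N) := by
  have neg : ∀ t : ℤ, (t % N = 0 ∧ (-t) % N = 0) ∨ (0 < t % N ∧ t % N < N ∧ (-t) % N = N - t % N) := by
    intro t
    have := Int.emod_nonneg t hN.ne'
    have := Int.emod_lt_of_pos t hN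
    by_cases h : t % N = 0
    · left; exact ⟨h, by rw [← Int.dvd_iff_emod_eq_zero] at *; simpa using h⟩
    · right
      refine ⟨by omega, by omega, ?_⟩
      rw [Int.neg_emod, if_neg (by rwa [Int.dvd_iff_emod_eq_zero]), Int.natAbs_of_nonneg hN.le]
  have hd : N ∣ p % N + q % N + r % N + (-(p + q + r)) % N := by
    have e1 := Int.dvd_self_sub_emod (x := p) (m := N)
    have e2 := Int.dvd_self_sub_emod (x := q) (m := N)
    have e3 := Int.dvd_self_sub_emod (x := r) (m := N)
    have e4 := Int.dvd_self_sub_emod (x := -(p + q + r)) (m := N)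
    have := (((e1.add e2).add e3).add e4)
    rw [← Int.dvd_neg] at this
    convert this using 1; ring
  obtain ⟨s, hs⟩ := hd
  have np := neg p
  have nq := neg q
  have nr := neg r
  have nt := neg (-(p+q+r))
  rw [neg_neg] at nt
  rw [Int.dvd_iff_emod_eq_zero, Int.dvd_iff_emod_eq_zero, Int.dvd_iff_emod_eq_zero]
  generalize p % N = p1 at *
  generalize q % N = q1 at *
  generalize r % N = r1 at *
  generalize (-(p + q + r)) % N = t1 at *
  generalize (-p) % N = p2 at *
  generalize (-q) % N = q2 at *
  generalize (-r) % N = r2 at *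
  generalize ((p + q + r)) % N = t2 at *
  have s0 : 0 ≤ s := by
    by_contra hh
    have : s ≤ -1 := by omega
    have : 0 ≤ p1 + q1 + r1 + t1 := by omega
    nlinarith [mul_le_mul_of_nonneg_left this hN.le]
  have s4 : s < 4 := by
    by_contra hh
    have : 4 ≤ s := by omega
    have : p1 + q1 + r1 + t1 < 4 * N := by omega
    nlinarith [mul_le_mul_of_nonneg_left this hN.le]
  interval_cases s <;> omega

open Matrix in
theorem white_coords (w : Fin 3 → Fin 3 → ℤ) (hw : LinearIndependent ℝ (fun i => castZ (w i))) :
    ∃ (N : ℤ) (μ : (Fin 3 → ℤ) →ₗ[ℤ] (Fin 3 → ℤ)), 0 < N ∧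
      (∀ x, N • x = ∑ i, μ x i • w i) ∧ (∀ i, μ (w i) = Pi.single i N) := by
  let W : Matrix (Fin 3) (Fin 3) ℤ := Matrix.of w
  have hD : W.det ≠ 0 := by
    have h1 : (W.map (Int.cast : ℤ → ℝ)).det ≠ 0 := by
      have : LinearIndependent ℝ (W.map (Int.cast : ℤ → ℝ)).row := hw
      rw [Matrix.linearIndependent_rows_iff_isUnit, Matrix.isUnit_iff_isUnit_det] at this
      exact this.ne_zero
    intro h0
    apply h1
    have := (Int.castRingHom ℝ).map_det W
    rw [h0] at this
    simpa using this.symm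
  refine ⟨|W.det|, W.det.sign • Matrix.vecMulLinear W.adjugate, abs_pos.mpr hD, ?_, ?_⟩
  · intro x
    have h : (x ᵥ* W.adjugate) ᵥ* W = W.det • x := by
      rw [Matrix.vecMul_vecMul, Matrix.adjugate_mul, Matrix.vecMul_smul, Matrix.vecMul_one]
    have h2 : ∑ i, (x ᵥ* W.adjugate) i • w i = W.det • x := by
      rw [← h, Matrix.vecMul_eq_sum]; rfl
    simp only [LinearMap.smul_apply, Matrix.vecMulLinear_apply, Pi.smul_apply, smul_assoc]
    rw [← Finset.smul_sum, h2, ← smul_assoc, smul_eq_mul, Int.sign_mul_self_eq_abs]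
  · intro i
    have h : w i = Pi.single i 1 ᵥ* W := by simp [W]
    simp only [LinearMap.smul_apply, Matrix.vecMulLinear_apply]
    rw [h, Matrix.vecMul_vecMul, Matrix.mul_adjugate, Matrix.vecMul_smul, Matrix.vecMul_one,
      ← smul_assoc, smul_eq_mul, Int.sign_mul_self_eq_abs, ← Pi.single_smul]
    simp

theorem white_hull (v : Fin 4 → (Fin 3 → ℤ)) (N : ℤ) (hN : 0 < N) (z : Fin 3 → ℤ)
    (p q r : ℤ) (hp : 0 ≤ p) (hq : 0 ≤ q) (hr : 0 ≤ r) (hs : p + q + r ≤ N)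
    (hz : N • z = p • (v 1 - v 0) + q • (v 2 - v 0) + r • (v 3 - v 0)) :
    castZ (v 0 + z) ∈ convexHull ℝ (Set.range (fun j => castZ (v j))) := by
  have hNR : (0:ℝ) < N := by exact_mod_cast hN
  have key : castZ (v 0 + z) = ∑ j, (![((N - p - q - r : ℤ) : ℝ) / N, (p:ℝ) / N, (q:ℝ) / N, (r:ℝ) / N] : Fin 4 → ℝ) j
      • castZ (v j) := by
    ext i
    have := congrFun hz i
    simp [Fin.sum_univ_four, castZ] at this ⊢
    have : (N:ℝ) * z i = p * (v 1 i - v 0 i) + q * (v 2 i - v 0 i) + r * (v 3 i - v 0 i) := by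
      exact_mod_cast this
    field_simp
    linarith
  rw [key]
  apply (convex_convexHull ℝ _).sum_mem
  · intro j _
    have h4 : (0:ℝ) ≤ ((N - p - q - r : ℤ) : ℝ) := by exact_mod_cast (by linarith : 0 ≤ N - p - q - r)
    have h1 : (0:ℝ) ≤ p := by exact_mod_cast hp
    have h2 : (0:ℝ) ≤ q := by exact_mod_cast hq
    have h3 : (0:ℝ) ≤ r := by exact_mod_cast hr
    fin_cases j
    · exact div_nonneg h4 hNR.le
    · exact div_nonneg h1 hNR.le
    · exact div_nonneg h2 hNR.le
    · exact div_nonneg h3 hNR.le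
  · simp [Fin.sum_univ_four]
    field_simp
    ring
  · intro j _
    exact subset_convexHull ℝ _ ⟨j, rfl⟩

/-- White's theorem: every lattice-free tetrahedron in `ℝ^3` has width 1. There is an
integer linear functional taking exactly two values, differing by 1, on the vertices. -/
theorem white_lattice_free_tetrahedron_width_one
    (v : Fin 4 → (Fin 3 → ℤ))
    (hAff : AffineIndependent ℝ (fun j => castZ (v j)))
    (hfree : ∀ x : Fin 3 → ℤ,
      castZ x ∈ convexHull ℝ (Set.range (fun j => castZ (v j))) → ∃ j, x = v j) :
    ∃ (φ : Fin 3 → ℤ) (a : ℤ), φ ≠ 0 ∧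
      (∀ j, (∑ i, φ i * v j i) = a ∨ (∑ i, φ i * v j i) = a + 1) ∧
      (∃ j, (∑ i, φ i * v j i) = a) ∧
      (∃ j, (∑ i, φ i * v j i) = a + 1) := by
  have hw : LinearIndependent ℝ (fun i : Fin 3 => castZ ((fun i : Fin 3 => v i.succ - v 0) i)) := by
    rw [affineIndependent_iff_linearIndependent_vsub ℝ _ (0 : Fin 4)] at hAff
    have := hAff.comp (fun i : Fin 3 => (⟨i.succ, Fin.succ_ne_zero i⟩ : {x : Fin 4 // x ≠ 0}))
      (fun i j h => by simpa using h)
    refine Eq.mp ?_ this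
    congr 1
    ext i j
    simp [castZ]
  obtain ⟨N, μ, hN, hμ, hμw⟩ := white_coords _ hw
  have hw0 : μ (v 1 - v 0) = Pi.single 0 N := hμw 0
  have hw1 : μ (v 2 - v 0) = Pi.single 1 N := hμw 1
  have hw2 : μ (v 3 - v 0) = Pi.single 2 N := hμw 2
  have hμ' : ∀ x, N • x = μ x 0 • (v 1 - v 0) + μ x 1 • (v 2 - v 0) + μ x 2 • (v 3 - v 0) := by
    intro x
    rw [hμ x, Fin.sum_univ_three]; rfl
  clear hμ hμw hw
  -- emptiness: residue sums are never `N`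
  have hE : ∀ x, μ x 0 % N + μ x 1 % N + μ x 2 % N + (-(μ x 0 + μ x 1 + μ x 2)) % N ≠ N := by
    intro x hx
    set z := x - (μ x 0 / N) • (v 1 - v 0) - (μ x 1 / N) • (v 2 - v 0) - (μ x 2 / N) • (v 3 - v 0)
      with hz
    have z0 : μ z 0 = μ x 0 % N := by
      rw [hz]; simp only [map_sub, map_smul, hw0, hw1, hw2] ; simp [Int.emod_def, mul_comm]
    have z1 : μ z 1 = μ x 1 % N := by
      rw [hz]; simp only [map_sub, map_smul, hw0, hw1, hw2] ; simp [Int.emod_def, mul_comm]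
    have z2 : μ z 2 = μ x 2 % N := by
      rw [hz]; simp only [map_sub, map_smul, hw0, hw1, hw2] ; simp [Int.emod_def, mul_comm]
    have n0 := Int.emod_nonneg (μ x 0) hN.ne'
    have n1 := Int.emod_nonneg (μ x 1) hN.ne'
    have n2 := Int.emod_nonneg (μ x 2) hN.ne'
    have n3 := Int.emod_nonneg (-(μ x 0 + μ x 1 + μ x 2)) hN.ne'
    have hzz := hμ' z
    rw [z0, z1, z2] at hzz
    obtain ⟨j, hj⟩ := hfree _ (white_hull v N hN z _ _ _ n0 n1 n2 (by linarith) hzz)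
    have hzj : z = v j - v 0 := by rw [← hj]; simp
    have hmod : ∀ i, μ z i % N = 0 := by
      intro i
      rw [hzj]
      fin_cases j
      · simp
      · change μ (v 1 - v 0) i % N = 0
        rw [hw0]; fin_cases i <;> simp
      · change μ (v 2 - v 0) i % N = 0
        rw [hw1]; fin_cases i <;> simp
      · change μ (v 3 - v 0) i % N = 0
        rw [hw2]; fin_cases i <;> simp
    have m0 := hmod 0
    have m1 := hmod 1
    have m2 := hmod 2
    rw [z0, Int.emod_emod] at m0
    rw [z1, Int.emod_emod] at m1
    rw [z2, Int.emod_emod] at m2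
    have := Int.emod_lt_of_pos (-(μ x 0 + μ x 1 + μ x 2)) hN
    omega
  have hT := fun x => white_two N (μ x 0) (μ x 1) (μ x 2) hN (hE x) (by
    have := hE (-x)
    simp only [map_neg, Pi.neg_apply] at this
    convert this using 3
    ring)
  clear hE
  -- generator
  have hgen : ∃ g : ℤ, 0 < g ∧ (∃ x, μ x 2 = g) ∧ ∀ x, g ∣ μ x 2 := by
    let H : Submodule ℤ ℤ := LinearMap.range ((LinearMap.proj 2).comp μ)
    have hH := (Submodule.IsPrincipal.span_singleton_generator H)
    set g := Submodule.IsPrincipal.generator H with hg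
    have hall : ∀ x, g ∣ μ x 2 := by
      intro x
      have : μ x 2 ∈ H := ⟨x, rfl⟩
      rwa [Submodule.IsPrincipal.mem_iff_generator_dvd] at this
    obtain ⟨x, hx⟩ : g ∈ H := Submodule.IsPrincipal.generator_mem H
    have hx : μ x 2 = g := hx
    have hg0 : g ≠ 0 := by
      intro h0
      have := hall (v 3 - v 0)
      rw [hw2, h0] at this
      simp at this
      omega
    rcases lt_or_gt_of_ne hg0 with h | h
    · exact ⟨-g, by linarith, ⟨-x, by simp [hx]⟩, fun y => by rw [neg_dvd]; exact hall y⟩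
    · exact ⟨g, h, ⟨x, hx⟩, hall⟩
  obtain ⟨g, hg, ⟨x', hx'⟩, hgd⟩ := hgen
  obtain ⟨x, hx⟩ : ∃ x, μ x 2 = -g := ⟨-x', by simp [hx']⟩
  clear hx' x'
  obtain ⟨n, hn⟩ : g ∣ N := by
    have := hgd (v 3 - v 0)
    rw [hw2] at this
    simpa using this
  have hnpos : 0 < n := by
    by_contra h
    nlinarith
  have hzero : ∀ y, N ∣ μ y 2 → N ∣ μ y 0 ∧ N ∣ μ y 1 := by
    intro y hy
    rcases hT y with h | h
    · exact ⟨h.1, h.2.1⟩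
    · exact absurd (Int.emod_eq_zero_of_dvd hy) h.2.2.1
  have hnx := hzero (n • x) (by simp only [map_smul, Pi.smul_apply, hx, smul_eq_mul]; rw [hn]; exact ⟨-1, by ring⟩)
  simp only [map_smul, Pi.smul_apply, smul_eq_mul] at hnx
  obtain ⟨⟨a, ha⟩, ⟨b, hb⟩⟩ := hnx
  have ha : μ x 0 = g * a := by
    apply mul_left_cancel₀ hnpos.ne'
    rw [ha, hn]; ring
  have hb : μ x 1 = g * b := by
    apply mul_left_cancel₀ hnpos.ne'
    rw [hb, hn]; ring
  have hk : ∀ k : ℤ, 1 ≤ k → k < n →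
      k * a % n ≠ 0 ∧ k * b % n ≠ 0 ∧ k * (1 - a - b) % n ≠ 0 ∧
      k * a % n + k * b % n + k * (1 - a - b) % n + (-k) % n = 2 * n := by
    intro k h1 h2
    have e := hT (k • x)
    simp only [map_smul, Pi.smul_apply, smul_eq_mul, ha, hb, hx] at e
    have r0 : k * (g * a) = g * (k * a) := by ring
    have r1 : k * (g * b) = g * (k * b) := by ring
    have r2 : k * (-g) = g * (-k) := by ring
    have r3 : -(g * (k * a) + g * (k * b) + g * (-k)) = g * (k * (1 - a - b)) := by ring
    rw [r0, r1, r2, r3, hn] at e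
    simp only [Int.mul_emod_mul_of_pos _ _ hg] at e
    rcases e with e | ⟨e0, e1, e2, e3, e4⟩
    · have := Int.dvd_of_mul_dvd_mul_left hg.ne' e.2.2
      rw [Int.dvd_neg] at this
      have := Int.le_of_dvd (by linarith) this
      omega
    · refine ⟨fun h => e0 (by rw [h, mul_zero]), fun h => e1 (by rw [h, mul_zero]),
        fun h => e3 (by rw [h, mul_zero]), ?_⟩
      apply mul_left_cancel₀ hg.ne'
      linarith
  have hcore := white_core n a b (1 - a - b) hnpos (fun k h1 h2 => (hk k h1 h2).1)
    (fun k h1 h2 => (hk k h1 h2).2.1) (fun k h1 h2 => (hk k h1 h2).2.2.1)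
    (fun k h1 h2 => (hk k h1 h2).2.2.2)
  -- every lattice point is a multiple of `x` modulo the sublattice
  have hrep : ∀ y, ∃ t : ℤ, N ∣ μ y 0 - t * (g * a) ∧ N ∣ μ y 1 - t * (g * b) ∧
      μ y 2 = - t * g := by
    intro y
    obtain ⟨t, ht⟩ := hgd y
    have := hzero (y - (-t) • x) (by
      simp only [map_sub, map_smul, Pi.sub_apply, Pi.smul_apply, smul_eq_mul, hx, ht]
      exact ⟨0, by ring⟩)
    simp only [map_sub, map_smul, Pi.sub_apply, Pi.smul_apply, smul_eq_mul, ha, hb] at this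
    exact ⟨-t, this.1, this.2, by rw [ht]; ring⟩
  -- from an integral functional with the right values
  have finish : ∀ ψ : (Fin 3 → ℤ) →ₗ[ℤ] ℤ, (∀ y, N ∣ ψ y) →
      (∀ j, ψ (v j - v 0) = 0 ∨ ψ (v j - v 0) = N) → (∃ j, ψ (v j - v 0) = N) →
      ∃ (φ : Fin 3 → ℤ) (a : ℤ), φ ≠ 0 ∧
      (∀ j, (∑ i, φ i * v j i) = a ∨ (∑ i, φ i * v j i) = a + 1) ∧
      (∃ j, (∑ i, φ i * v j i) = a) ∧
      (∃ j, (∑ i, φ i * v j i) = a + 1) := by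
    intro ψ hψ h1 h2
    choose φ hφ using fun i : Fin 3 => hψ (Pi.single i 1)
    have hval : ∀ y, N * ∑ i, φ i * y i = ψ y := by
      intro y
      rw [LinearMap.pi_apply_eq_sum_univ ψ y, Finset.mul_sum]
      refine Finset.sum_congr rfl fun i _ => ?_
      have e : (fun j => if i = j then (1:ℤ) else 0) = Pi.single i 1 := by
        ext j; simp [Pi.single_apply, eq_comm]
      rw [e, hφ i, smul_eq_mul]; ring
    have hdiff : ∀ j, N * (∑ i, φ i * v j i - ∑ i, φ i * v 0 i) = ψ (v j - v 0) := by
      intro j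
      rw [mul_sub, hval, hval, map_sub]
    have c1 : ∀ j, ψ (v j - v 0) = N → ∑ i, φ i * v j i = ∑ i, φ i * v 0 i + 1 := by
      intro j h
      have := hdiff j
      rw [h] at this
      have := mul_left_cancel₀ hN.ne' (this.trans (mul_one N).symm)
      linarith
    obtain ⟨j, hj⟩ := h2
    refine ⟨φ, ∑ i, φ i * v 0 i, ?_, ?_, ⟨0, rfl⟩, ⟨j, c1 j hj⟩⟩
    · intro h0
      have := c1 j hj
      simp [h0] at this
    · intro j
      rcases h1 j with h | h
      · left
        have := hdiff j
        rw [h] at this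
        have := mul_left_cancel₀ hN.ne' (this.trans (mul_zero N).symm)
        linarith
      · right; exact c1 j h
  have P : ∀ i : Fin 3, ∀ y, (LinearMap.proj (R := ℤ) (φ := fun _ : Fin 3 => ℤ) i ∘ₗ μ) y = μ y i := fun i y => rfl
  rcases hcore with ⟨s, h⟩ | ⟨s, h⟩ | ⟨s, h⟩
  · apply finish (LinearMap.proj 0 ∘ₗ μ + LinearMap.proj 2 ∘ₗ μ)
    · intro y
      obtain ⟨t, h0, h1, h2⟩ := hrep y
      rw [LinearMap.add_apply, P, P]
      have : μ y 0 + μ y 2 = (μ y 0 - t * (g * a)) + N * (t * s) := by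
        rw [h2, hn]; linear_combination t * g * h
      rw [this]; exact h0.add (Dvd.intro _ rfl)
    · intro j
      rw [LinearMap.add_apply, P, P]
      fin_cases j <;> simp [hw0, hw1, hw2]
    · exact ⟨1, by rw [LinearMap.add_apply, P, P, hw0]; simp⟩
  · apply finish (LinearMap.proj 1 ∘ₗ μ + LinearMap.proj 2 ∘ₗ μ)
    · intro y
      obtain ⟨t, h0, h1, h2⟩ := hrep y
      rw [LinearMap.add_apply, P, P]
      have : μ y 1 + μ y 2 = (μ y 1 - t * (g * b)) + N * (t * s) := by
        rw [h2, hn]; linear_combination t * g * h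
      rw [this]; exact h1.add (Dvd.intro _ rfl)
    · intro j
      rw [LinearMap.add_apply, P, P]
      fin_cases j <;> simp [hw0, hw1, hw2]
    · exact ⟨2, by rw [LinearMap.add_apply, P, P, hw1]; simp⟩
  · apply finish (LinearMap.proj 0 ∘ₗ μ + LinearMap.proj 1 ∘ₗ μ)
    · intro y
      obtain ⟨t, h0, h1, h2⟩ := hrep y
      rw [LinearMap.add_apply, P, P]
      have : μ y 0 + μ y 1 = (μ y 0 - t * (g * a)) + (μ y 1 - t * (g * b)) + N * (-t * s) := by
        rw [hn]; linear_combination (-t) * g * h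
      rw [this]; exact (h0.add h1).add (Dvd.intro _ rfl)
    · intro j
      rw [LinearMap.add_apply, P, P]
      fin_cases j <;> simp [hw0, hw1, hw2]
    · exact ⟨1, by rw [LinearMap.add_apply, P, P, hw0]; simp⟩
end
end

section
/- Let T = ℝ^k/ℤ^k and let S ⊆ T be a closed subset satisfying nS ⊆ S for all natural numbers n ≥ 1. Then S is a finite union of closed subgroups of T. -/
open Set

noncomputable section

open Filter Topology MeasureTheory UnitAddTorus

namespace LawrenceAux

lemma mF_add {k : ℕ} (n : Fin k → ℤ) (x y : UnitAddTorus (Fin k)) :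
    mFourier n (x + y) = mFourier n x * mFourier n y := by
  simp [mFourier, fourier_apply, AddCircle.toCircle_add, smul_add, Finset.prod_mul_distrib]

lemma mF_zero {k : ℕ} (n : Fin k → ℤ) : mFourier n (0 : UnitAddTorus (Fin k)) = 1 := by
  simp [mFourier]

lemma mF_nsmul {k : ℕ} (n : Fin k → ℤ) (x : UnitAddTorus (Fin k)) (m : ℕ) :
    mFourier n (m • x) = mFourier n x ^ m := by
  induction m with
  | zero => simp [mF_zero]
  | succ m ih => rw [succ_nsmul, mF_add, ih, pow_succ]

lemma no_small (z : ℂ) (h : ∀ m : ℕ, ‖z ^ m - 1‖ < 1 / 2) : z = 1 := by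
  by_contra hz
  have hpos : 0 < ‖z - 1‖ := norm_pos_iff.2 (sub_ne_zero.2 hz)
  have key : ∀ j : ℕ, (3 / 2 : ℝ) ^ j * ‖z - 1‖ ≤ ‖z ^ (2 ^ j) - 1‖ := by
    intro j
    induction j with
    | zero => simp
    | succ j ih =>
      have e : z ^ (2 ^ (j + 1)) - 1 = (z ^ (2 ^ j) - 1) * (z ^ (2 ^ j) + 1) := by ring
      have h2 : (3 / 2 : ℝ) ≤ ‖z ^ (2 ^ j) + 1‖ := by
        have h3 : (2 : ℂ) = (z ^ (2 ^ j) + 1) - (z ^ (2 ^ j) - 1) := by ring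
        have h4 := norm_sub_le (z ^ (2 ^ j) + 1) (z ^ (2 ^ j) - 1)
        rw [← h3] at h4
        have h5 := h (2 ^ j)
        simp only [Complex.norm_ofNat] at h4
        linarith
      rw [e, norm_mul, pow_succ]
      have := mul_le_mul ih h2 (by norm_num) (norm_nonneg _)
      linarith
  obtain ⟨j, hj⟩ := pow_unbounded_of_one_lt (1 / ‖z - 1‖) (by norm_num : (1 : ℝ) < 3 / 2)
  rw [div_lt_iff₀ hpos] at hj
  have := key j
  have := h (2 ^ j)
  linarith

lemma separation {k : ℕ} (H : AddSubgroup (UnitAddTorus (Fin k)))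
    (hH : IsClosed (H : Set (UnitAddTorus (Fin k)))) (x : UnitAddTorus (Fin k))
    (hx : ∀ n : Fin k → ℤ, (∀ h ∈ H, mFourier n h = 1) → mFourier n x = 1) : x ∈ H := by
  by_contra hxH
  have : CompactSpace H := isCompact_iff_compactSpace.1 hH.isCompact
  let : MeasurableSpace H := borel H
  have : BorelSpace H := ⟨rfl⟩
  let μ : Measure H := Measure.addHaarMeasure ⊤
  have : IsFiniteMeasure μ := by infer_instance
  have hint : ∀ (y : UnitAddTorus (Fin k)) (f : C(UnitAddTorus (Fin k), ℂ)),
      Integrable (fun h : H => f (y + h)) μ := by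
    intro y f
    have hc : Continuous (fun h : H => f (y + h)) := by fun_prop
    exact hc.integrable_of_hasCompactSupport (HasCompactSupport.of_compactSpace _)
  let A : UnitAddTorus (Fin k) → C(UnitAddTorus (Fin k), ℂ) →L[ℂ] ℂ := fun y =>
    LinearMap.mkContinuous
      { toFun := fun f => ∫ h : H, f (y + h) ∂μ
        map_add' := fun f g => by
          simpa using integral_add (hint y f) (hint y g)
        map_smul' := fun c f => by
          simpa using integral_const_mul c (fun h : H => f (y + h)) (μ := μ) }
      (μ.real univ) (fun f => by
        have := norm_integral_le_of_norm_le_const (μ := μ) (f := fun h : H => f (y + h))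
          (C := ‖f‖) (Eventually.of_forall fun h => f.norm_coe_le_norm _)
        simpa [mul_comm] using this)
  have hA : ∀ y f, A y f = ∫ h : H, f (y + h) ∂μ := fun y f => rfl
  have hAm : ∀ y n, A y (mFourier n) = mFourier n y * ∫ h : H, mFourier n (h : UnitAddTorus (Fin k)) ∂μ := by
    intro y n
    rw [hA]
    simp_rw [mF_add]
    exact integral_const_mul _ _
  have hEq : A x = A 0 := by
    have hd : Dense ((Submodule.span ℂ (range (mFourier (d := Fin k)))) :
        Set C(UnitAddTorus (Fin k), ℂ)) :=
      Submodule.dense_iff_topologicalClosure_eq_top.2 span_mFourier_closure_eq_top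
    refine ContinuousLinearMap.ext_on hd ?_
    rintro _ ⟨n, rfl⟩
    rw [hAm, hAm, mF_zero]
    by_cases hn : ∀ h ∈ H, mFourier n h = 1
    · rw [hx n hn]
    · push Not at hn
      obtain ⟨g, hg, hg1⟩ := hn
      have h0 : ∫ h : H, mFourier n (h : UnitAddTorus (Fin k)) ∂μ = 0 := by
        have h1 := integral_add_left_eq_self (μ := μ)
          (fun h : H => mFourier n (h : UnitAddTorus (Fin k))) ⟨g, hg⟩
        simp only [AddSubgroup.coe_add, mF_add] at h1
        rw [integral_const_mul] at h1
        by_contra hne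
        exact hg1 (mul_right_cancel₀ hne (by rw [h1, one_mul]))
      rw [h0]; simp
  have hcl : IsClosed ((fun y => y - x) ⁻¹' (H : Set (UnitAddTorus (Fin k)))) :=
    hH.preimage (by fun_prop)
  have hdisj : Disjoint (H : Set (UnitAddTorus (Fin k)))
      ((fun y => y - x) ⁻¹' (H : Set (UnitAddTorus (Fin k)))) := by
    rw [Set.disjoint_left]
    intro y hy hy2
    apply hxH
    have := H.sub_mem hy hy2
    simpa using this
  obtain ⟨f, hf0, hf1, -⟩ := exists_continuous_zero_one_of_isClosed hH hcl hdisj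
  let F : C(UnitAddTorus (Fin k), ℂ) := ⟨fun y => (f y : ℂ), by fun_prop⟩
  have e1 : A x F = μ.real univ := by
    rw [hA]
    have : ∀ h : H, F (x + h) = 1 := by
      intro h
      have := hf1 (x := x + h) (by simp)
      change ((f (x + h) : ℝ) : ℂ) = 1
      rw [this]; simp
    simp [this]
  have e0 : A 0 F = 0 := by
    rw [hA]
    have : ∀ h : H, F (0 + h) = 0 := by
      intro h
      have := hf0 (x := 0 + h) (by simp)
      change ((f (0 + h) : ℝ) : ℂ) = 0
      rw [this]; simp
    simp_rw [this]
    simp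
  rw [hEq, e0] at e1
  have e2 : μ.real univ = 0 := by exact_mod_cast e1.symm
  have : μ univ = 1 := Measure.addHaarMeasure_self
  rw [Measure.real, this] at e2
  simp at e2

/-- subgroups close to a closed subgroup are contained in it -/
lemma exists_nhd {k : ℕ} (H : AddSubgroup (UnitAddTorus (Fin k)))
    (hH : IsClosed (H : Set (UnitAddTorus (Fin k)))) :
    ∃ U : Set (UnitAddTorus (Fin k)), IsOpen U ∧ (H : Set (UnitAddTorus (Fin k))) ⊆ U ∧
      ∀ K : AddSubgroup (UnitAddTorus (Fin k)), (K : Set (UnitAddTorus (Fin k))) ⊆ U → K ≤ H := by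
  let Λ : AddSubgroup (Fin k → ℤ) :=
    { carrier := {n | ∀ h ∈ H, mFourier n h = 1}
      add_mem' := fun {a b} ha hb h hh => by rw [mFourier_add, ha h hh, hb h hh, one_mul]
      zero_mem' := fun h hh => by rw [mFourier_zero]; rfl
      neg_mem' := fun {a} ha h hh => by rw [mFourier_neg, ha h hh, map_one] }
  obtain ⟨s, hs⟩ := IsNoetherian.noetherian (AddSubgroup.toIntSubmodule Λ)
  have hsΛ : ∀ n ∈ s, ∀ h ∈ H, mFourier n h = 1 := by
    intro n hn
    have : n ∈ AddSubgroup.toIntSubmodule Λ := hs ▸ Submodule.subset_span hn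
    exact this
  refine ⟨⋂ n ∈ s, {x | ‖mFourier n x - 1‖ < 1 / 2}, ?_, ?_, ?_⟩
  · refine isOpen_biInter_finset fun n _ => ?_
    exact isOpen_lt (by fun_prop) continuous_const
  · intro h hh
    simp only [mem_iInter, mem_ofPred_eq]
    intro n hn
    rw [hsΛ n hn h hh]; norm_num
  · intro K hK x hx
    have h1 : ∀ n ∈ s, mFourier n x = 1 := by
      intro n hn
      apply no_small
      intro m
      have := hK (K.nsmul_mem hx m)
      simp only [mem_iInter, mem_ofPred_eq] at this
      rw [← mF_nsmul]
      exact this n hn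
    apply separation H hH
    intro n hn
    have hn' : n ∈ Submodule.span ℤ (s : Set (Fin k → ℤ)) := by
      rw [hs]; exact hn
    let Λx : AddSubgroup (Fin k → ℤ) :=
      { carrier := {n | mFourier n x = 1}
        add_mem' := fun {a b} ha hb => by
          simp only [mem_ofPred_eq] at *
          rw [mFourier_add, ha, hb, one_mul]
        zero_mem' := by simp [mFourier_zero]
        neg_mem' := fun {a} ha => by
          simp only [mem_ofPred_eq] at *
          rw [mFourier_neg, ha, map_one] }
    have : Submodule.span ℤ (s : Set (Fin k → ℤ)) ≤ AddSubgroup.toIntSubmodule Λx :=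
      Submodule.span_le.2 fun n hn => h1 n hn
    exact this hn'

lemma finite_maximal {k : ℕ} (S : Set (UnitAddTorus (Fin k))) (hS : IsClosed S) :
    {G : AddSubgroup (UnitAddTorus (Fin k)) |
      Maximal (· ∈ {G : AddSubgroup (UnitAddTorus (Fin k)) |
        IsClosed (G : Set (UnitAddTorus (Fin k))) ∧ (G : Set (UnitAddTorus (Fin k))) ⊆ S}) G}.Finite := by
  by_contra hinf
  set M := {G : AddSubgroup (UnitAddTorus (Fin k)) |
      Maximal (· ∈ {G : AddSubgroup (UnitAddTorus (Fin k)) |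
        IsClosed (G : Set (UnitAddTorus (Fin k))) ∧ (G : Set (UnitAddTorus (Fin k))) ⊆ S}) G} with hM
  have hinf : M.Infinite := hinf
  have : NeBot (cofinite ⊓ 𝓟 M) := hinf.cofinite_inf_principal_neBot
  let u : Ultrafilter (AddSubgroup (UnitAddTorus (Fin k))) := Ultrafilter.of (cofinite ⊓ 𝓟 M)
  have hu : (u : Filter _) ≤ cofinite ⊓ 𝓟 M := Ultrafilter.of_le _
  have huM : ∀ᶠ K in (u : Filter (AddSubgroup (UnitAddTorus (Fin k)))), K ∈ M := (hu.trans inf_le_right) (mem_principal_self M)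
  let H : AddSubgroup (UnitAddTorus (Fin k)) :=
    { carrier := {x | ∃ f : AddSubgroup (UnitAddTorus (Fin k)) → UnitAddTorus (Fin k),
        (∀ K, f K ∈ K) ∧ Tendsto f u (𝓝 x)}
      add_mem' := by
        rintro a b ⟨f, hf, hfa⟩ ⟨g, hg, hgb⟩
        exact ⟨fun K => f K + g K, fun K => K.add_mem (hf K) (hg K), hfa.add hgb⟩
      zero_mem' := ⟨fun _ => 0, fun K => K.zero_mem, tendsto_const_nhds⟩
      neg_mem' := by
        rintro a ⟨f, hf, hfa⟩
        exact ⟨fun K => - f K, fun K => K.neg_mem (hf K), hfa.neg⟩ }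
  have hHS : (H : Set (UnitAddTorus (Fin k))) ⊆ S := by
    rintro x ⟨f, hf, hfx⟩
    refine hS.mem_of_tendsto hfx ?_
    filter_upwards [huM] with K hK
    exact hK.prop.2 (hf K)
  have hcS : (H.topologicalClosure : Set (UnitAddTorus (Fin k))) ⊆ S :=
    closure_minimal hHS hS
  have hcc := H.isClosed_topologicalClosure
  obtain ⟨U, hUo, hUH, hU⟩ := exists_nhd H.topologicalClosure hcc
  have hev : ∀ᶠ K : AddSubgroup (UnitAddTorus (Fin k)) in (u : Filter (AddSubgroup (UnitAddTorus (Fin k)))), (K : Set (UnitAddTorus (Fin k))) ⊆ U := by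
    by_contra hne
    rw [← Ultrafilter.eventually_not] at hne
    have : ∀ K : AddSubgroup (UnitAddTorus (Fin k)), ∃ y ∈ K,
        ¬ (K : Set (UnitAddTorus (Fin k))) ⊆ U → y ∉ U := by
      intro K
      by_cases h : (K : Set (UnitAddTorus (Fin k))) ⊆ U
      · exact ⟨0, K.zero_mem, fun h' => absurd h h'⟩
      · obtain ⟨y, hy, hyU⟩ := Set.not_subset.1 h
        exact ⟨y, hy, fun _ => hyU⟩
    choose f hf hfU using this
    obtain ⟨x, -, hx⟩ := isCompact_univ.ultrafilter_le_nhds (u.map f) (by simp)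
    have hx' : Tendsto f u (𝓝 x) := hx
    have hxU : x ∈ Uᶜ := by
      refine hUo.isClosed_compl.mem_of_tendsto hx' ?_
      filter_upwards [hne] with K hK
      exact hfU K hK
    exact hxU (hUH (H.le_topologicalClosure ⟨f, hf, hx'⟩))
  have heq : ∀ᶠ K in (u : Filter (AddSubgroup (UnitAddTorus (Fin k)))), K = H.topologicalClosure := by
    filter_upwards [hev, huM] with K hK hKM
    exact le_antisymm (hU K hK) (hKM.2 ⟨hcc, hcS⟩ (hU K hK))
  have hne : ∀ᶠ K in (u : Filter (AddSubgroup (UnitAddTorus (Fin k)))), K ≠ H.topologicalClosure :=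
    (hu.trans inf_le_left) (by simp [mem_cofinite])
  obtain ⟨K, h1, h2⟩ := (heq.and hne).exists
  exact h2 h1

end LawrenceAux

open LawrenceAux in
/-- Lawrence's theorem (weak form): a closed subset `S` of the torus `T^k = ℝ^k/ℤ^k`
with `nS ⊆ S` for all `n ≥ 1` is a finite union of closed subgroups. -/
theorem lawrence_closed_multiplication_stable (k : ℕ)
    (S : Set (Fin k → AddCircle (1 : ℝ))) (hS : IsClosed S)
    (hmul : ∀ n : ℕ, 1 ≤ n → (fun x => n • x) '' S ⊆ S) :
    ∃ 𝒢 : Finset (AddSubgroup (Fin k → AddCircle (1 : ℝ))),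
      (∀ G ∈ 𝒢, IsClosed (G : Set (Fin k → AddCircle (1 : ℝ)))) ∧
      S = ⋃ G ∈ 𝒢, (G : Set (Fin k → AddCircle (1 : ℝ))) := by
  classical
  set C : Set (AddSubgroup (Fin k → AddCircle (1 : ℝ))) :=
    {G | IsClosed (G : Set (Fin k → AddCircle (1 : ℝ))) ∧
      (G : Set (Fin k → AddCircle (1 : ℝ))) ⊆ S} with hC
  have hfin : {G | Maximal (· ∈ C) G}.Finite := finite_maximal (k := k) S hS
  refine ⟨hfin.toFinset, ?_, ?_⟩
  · intro G hG
    rw [Set.Finite.mem_toFinset] at hG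
    exact hG.prop.1
  apply Set.Subset.antisymm
  · intro x hx
    have hG : (AddSubgroup.zmultiples x).topologicalClosure ∈ C := by
      refine ⟨AddSubgroup.isClosed_topologicalClosure _, ?_⟩
      intro y hy
      have hy' := mapClusterPt_atTop_nsmul_iff_mem_topologicalClosure_zmultiples.2 hy
      rw [← hS.closure_eq]
      refine mem_closure_iff_clusterPt.2 (ClusterPt.mono hy' ?_)
      rw [le_principal_iff, mem_map]
      filter_upwards [eventually_ge_atTop 1] with n hn
      exact hmul n hn ⟨x, hx, rfl⟩
    obtain ⟨m, hm, hmax⟩ := zorn_le_nonempty₀ C (by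
      intro c hc hchain y hy
      refine ⟨(sSup c).topologicalClosure, ⟨AddSubgroup.isClosed_topologicalClosure _, ?_⟩, ?_⟩
      · refine closure_minimal ?_ hS
        intro z hz
        obtain ⟨K, hK, hzK⟩ := (AddSubgroup.mem_sSup_of_directedOn ⟨y, hy⟩
          hchain.directedOn).1 hz
        exact (hc hK).2 hzK
      · intro z hz
        exact (le_sSup hz).trans (AddSubgroup.le_topologicalClosure _)) _ hG
    simp only [mem_iUnion]
    refine ⟨m, by simpa using hmax, hm (AddSubgroup.le_topologicalClosure _
      (AddSubgroup.mem_zmultiples x))⟩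
  · refine Set.iUnion₂_subset fun G hG => ?_
    rw [Set.Finite.mem_toFinset] at hG
    exact hG.prop.2
end
end

section
/- Let T be a compact abelian Lie group (e.g., a closed subgroup of a torus) and let U be an open subset of T. Among all closed subgroups of T disjoint from U, there are only finitely many maximal ones with respect to inclusion. -/
open Set

noncomputable section

open MeasureTheory UnitAddTorus Filter Topology

lemma mFourier_apply_add {n : ℕ} (m : Fin n → ℤ) (x y : UnitAddTorus (Fin n)) :
    mFourier m (x + y) = mFourier m x * mFourier m y := by
  simp only [mFourier, ContinuousMap.coe_mk, ← Finset.prod_mul_distrib]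
  refine Finset.prod_congr rfl fun i _ => ?_
  rw [fourier_apply, fourier_apply, fourier_apply, Pi.add_apply, zsmul_add,
    AddCircle.toCircle_add, Circle.coe_mul]

lemma mFourier_apply_zero {n : ℕ} (m : Fin n → ℤ) :
    mFourier m (0 : UnitAddTorus (Fin n)) = 1 := by
  simp [mFourier]

lemma exists_char_sep {n : ℕ} (L : AddSubgroup (UnitAddTorus (Fin n)))
    (hL : IsClosed (L : Set (UnitAddTorus (Fin n)))) (x : UnitAddTorus (Fin n)) (hx : x ∉ L) :
    ∃ m : Fin n → ℤ, (∀ l ∈ L, mFourier m l = 1) ∧ mFourier m x ≠ 1 := by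
  by_contra! hcon
  let : MeasurableSpace L := borel L
  have : BorelSpace L := ⟨rfl⟩
  have : CompactSpace L := isCompact_iff_compactSpace.mp hL.isCompact
  let μ : Measure L := Measure.addHaar
  have intg : ∀ (y : UnitAddTorus (Fin n)) (f : C(UnitAddTorus (Fin n), ℂ)),
      Integrable (fun l : L => f (y + l)) μ := by
    intro y f
    have hc : Continuous (fun l : L => f (y + l)) := by fun_prop
    exact hc.integrable_of_hasCompactSupport (HasCompactSupport.of_compactSpace _)
  have cont : ∀ y : UnitAddTorus (Fin n),
      Continuous fun f : C(UnitAddTorus (Fin n), ℂ) => ∫ l : L, f (y + l) ∂μ := by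
    intro y
    refine (LipschitzWith.of_dist_le_mul (K := (μ univ).toNNReal) fun f g => ?_).continuous
    rw [dist_eq_norm, ← integral_sub (intg _ _) (intg _ _)]
    refine (norm_integral_le_of_norm_le_const (C := dist f g)
      (Eventually.of_forall fun l => ?_)).trans ?_
    · rw [← dist_eq_norm]
      exact ContinuousMap.dist_apply_le_dist _
    · rw [mul_comm]
      exact le_rfl
  let S : Submodule ℂ C(UnitAddTorus (Fin n), ℂ) :=
    { carrier := {f | ∫ l : L, f (x + l) ∂μ = ∫ l : L, f (0 + l) ∂μ}
      zero_mem' := by simp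
      add_mem' := by
        intro f g hf hg
        simp only [mem_ofPred_eq, ContinuousMap.add_apply] at *
        rw [integral_add (intg _ _) (intg _ _), integral_add (intg _ _) (intg _ _), hf, hg]
      smul_mem' := by
        intro c f hf
        simp only [mem_ofPred_eq, ContinuousMap.smul_apply] at *
        rw [integral_smul, integral_smul, hf] }
  have hSc : IsClosed (S : Set C(UnitAddTorus (Fin n), ℂ)) :=
    isClosed_eq (cont x) (cont 0)
  have hSm : ∀ m, mFourier m ∈ S := by
    intro m
    change ∫ l : L, mFourier m (x + l) ∂μ = ∫ l : L, mFourier m (0 + l) ∂μ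
    simp_rw [mFourier_apply_add, mFourier_apply_zero, integral_const_mul]
    by_cases h : ∀ l ∈ L, mFourier m l = 1
    · rw [hcon m h]
    · push Not at h
      obtain ⟨l₀, hl₀, hne⟩ := h
      have h1 := integral_add_left_eq_self (μ := μ) (fun l : L => mFourier m (l : UnitAddTorus (Fin n)))
        (⟨l₀, hl₀⟩ : L)
      simp only [AddSubgroup.coe_add, mFourier_apply_add, integral_const_mul] at h1
      have h2 : ∫ l : L, mFourier m (l : UnitAddTorus (Fin n)) ∂μ = 0 := by
        by_contra h0
        exact hne (mul_right_cancel₀ h0 (by rw [h1, one_mul]))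
      simp [h2]
  have htop : S = ⊤ := by
    rw [eq_top_iff, ← span_mFourier_closure_eq_top]
    refine Submodule.topologicalClosure_minimal _ ?_ hSc
    rw [Submodule.span_le]
    rintro _ ⟨m, rfl⟩
    exact hSm m
  let f : C(UnitAddTorus (Fin n), ℂ) :=
    ⟨fun y => ((Metric.infDist y (L : Set (UnitAddTorus (Fin n))) : ℝ) : ℂ),
      Complex.continuous_ofReal.comp (Metric.continuous_infDist_pt _)⟩
  have hf : f ∈ S := htop ▸ Submodule.mem_top
  change ∫ l : L, ((Metric.infDist (x + l) (L : Set (UnitAddTorus (Fin n))) : ℝ) : ℂ) ∂μ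
    = ∫ l : L, ((Metric.infDist (0 + (l : UnitAddTorus (Fin n))) (L : Set (UnitAddTorus (Fin n))) : ℝ) : ℂ) ∂μ at hf
  have hr : ∀ l : L, Metric.infDist (0 + (l : UnitAddTorus (Fin n))) (L : Set (UnitAddTorus (Fin n))) = 0 := by
    intro l
    rw [zero_add]
    exact Metric.infDist_zero_of_mem l.2
  simp_rw [hr] at hf
  rw [integral_complex_ofReal] at hf
  have hf' : ∫ l : L, Metric.infDist (x + l) (L : Set (UnitAddTorus (Fin n))) ∂μ = 0 := by
    simpa using hf
  have hcc : Continuous (fun l : L => Metric.infDist (x + l) (L : Set (UnitAddTorus (Fin n)))) :=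
    (Metric.continuous_infDist_pt _).comp (by fun_prop)
  have hpos : 0 < ∫ l : L, Metric.infDist (x + l) (L : Set (UnitAddTorus (Fin n))) ∂μ := by
    refine hcc.integral_pos_of_hasCompactSupport_nonneg_nonzero (x := 0)
      (HasCompactSupport.of_compactSpace _) (fun _ => Metric.infDist_nonneg) ?_
    have := (hL.notMem_iff_infDist_pos ⟨0, L.zero_mem⟩).mp hx
    simpa using this.ne'
  exact hpos.ne' hf'

lemma eq_one_of_pow_close (z : ℂ) (h : ∀ k : ℕ, ‖z ^ k - 1‖ < 1 / 2) : z = 1 := by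
  have key : ∀ k : ℕ, (3 / 2 : ℝ) ^ k * ‖z - 1‖ ≤ ‖z ^ (2 ^ k) - 1‖ := by
    intro k
    induction k with
    | zero => simp
    | succ k ih =>
      set w := z ^ (2 ^ k) with hw
      have h1 : z ^ (2 ^ (k + 1)) - 1 = (w - 1) * (w + 1) := by
        rw [hw, pow_succ, pow_mul]; ring
      have h2 : (3 / 2 : ℝ) ≤ ‖w + 1‖ := by
        have h3 := h (2 ^ k)
        rw [← hw] at h3
        have h4 : ‖(2 : ℂ)‖ ≤ ‖w + 1‖ + ‖w - 1‖ := by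
          have := norm_sub_le (w + 1) (w - 1)
          have e : (w + 1) - (w - 1) = 2 := by ring
          rwa [e] at this
        rw [Complex.norm_ofNat] at h4
        linarith
      rw [h1, norm_mul, pow_succ]
      nlinarith [norm_nonneg (w - 1)]
  by_contra hz
  have hp : 0 < ‖z - 1‖ := norm_pos_iff.mpr (sub_ne_zero.mpr hz)
  obtain ⟨k, hk⟩ := pow_unbounded_of_one_lt (1 / ‖z - 1‖) (by norm_num : (1 : ℝ) < 3 / 2)
  have h1 := key k
  have h2 := h (2 ^ k)
  rw [div_lt_iff₀ hp] at hk
  linarith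

lemma exists_nhd_of_closed {n : ℕ} (L : AddSubgroup (UnitAddTorus (Fin n)))
    (hL : IsClosed (L : Set (UnitAddTorus (Fin n)))) :
    ∃ N : Set (UnitAddTorus (Fin n)), IsOpen N ∧ (L : Set (UnitAddTorus (Fin n))) ⊆ N ∧
      ∀ K : AddSubgroup (UnitAddTorus (Fin n)), (K : Set (UnitAddTorus (Fin n))) ⊆ N → K ≤ L := by
  let A : Submodule ℤ (Fin n → ℤ) := AddSubgroup.toIntSubmodule
    { carrier := {m | ∀ l ∈ L, mFourier m l = 1}
      zero_mem' := by
        intro l _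
        simp [mFourier_zero]
      add_mem' := by
        intro a b ha hb l hl
        rw [mFourier_add, ha l hl, hb l hl, one_mul]
      neg_mem' := by
        intro a ha l hl
        rw [mFourier_neg, ha l hl, map_one] }
  have hA : ∀ m, m ∈ A ↔ ∀ l ∈ L, mFourier m l = 1 := fun m => Iff.rfl
  obtain ⟨s, hs⟩ : A.FG := IsNoetherian.noetherian A
  have hsA : ∀ m ∈ s, m ∈ A := fun m hm => hs ▸ Submodule.subset_span hm
  refine ⟨⋂ m ∈ s, {x | ‖mFourier m x - 1‖ < 1 / 2}, ?_, ?_, ?_⟩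
  · refine isOpen_biInter_finset fun m _ => ?_
    exact isOpen_lt (by fun_prop) continuous_const
  · intro l hl
    simp only [mem_iInter, mem_ofPred_eq]
    intro m hm
    rw [(hA m).mp (hsA m hm) l hl]
    norm_num
  · intro K hK x hx
    by_contra hxL
    obtain ⟨m, hm, hne⟩ := exists_char_sep L hL x hxL
    apply hne
    have hmA : m ∈ Submodule.span ℤ (s : Set (Fin n → ℤ)) := hs ▸ (hA m).mpr hm
    have hle : Submodule.span ℤ (s : Set (Fin n → ℤ)) ≤ AddSubgroup.toIntSubmodule
      ({ carrier := {m | mFourier m x = 1}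
         zero_mem' := by simp [mFourier_zero]
         add_mem' := by
          intro a b ha hb
          simp only [mem_ofPred_eq] at *
          rw [mFourier_add, ha, hb, one_mul]
         neg_mem' := by
          intro a ha
          simp only [mem_ofPred_eq] at *
          rw [mFourier_neg, ha, map_one] } : AddSubgroup (Fin n → ℤ)) := by
      rw [Submodule.span_le]
      intro m hm
      change mFourier m x = 1
      refine eq_one_of_pow_close _ fun k => ?_
      have hpow : mFourier m x ^ k = mFourier m (k • x) := by
        induction k with
        | zero => simp [mFourier_apply_zero]
        | succ k ih => rw [pow_succ, ih, succ_nsmul, mFourier_apply_add]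
      rw [hpow]
      have := hK (K.nsmul_mem hx k)
      simp only [mem_iInter, mem_ofPred_eq] at this
      exact this m hm
    exact hle hmA

/-- The limit of a family of subgroups along an ultrafilter. -/
def ultraLim {G ι : Type*} [AddCommGroup G] [TopologicalSpace G] [IsTopologicalAddGroup G]
    (F : Ultrafilter ι) (K : ι → AddSubgroup G) : AddSubgroup G where
  carrier := {x | ∀ V ∈ 𝓝 x, ∀ᶠ i in F, ∃ y ∈ K i, y ∈ V}
  zero_mem' := fun V hV => Eventually.of_forall fun i => ⟨0, (K i).zero_mem, mem_of_mem_nhds hV⟩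
  add_mem' := by
    intro a b ha hb V hV
    have h : Tendsto (fun p : G × G => p.1 + p.2) (𝓝 a ×ˢ 𝓝 b) (𝓝 (a + b)) := by
      rw [← nhds_prod_eq]; exact continuous_add.tendsto (a, b)
    obtain ⟨V₁, h₁, V₂, h₂, h12⟩ := Filter.mem_prod_iff.mp (h hV)
    filter_upwards [ha V₁ h₁, hb V₂ h₂] with i hi hj
    obtain ⟨y, hy, hyV⟩ := hi
    obtain ⟨z, hz, hzV⟩ := hj
    exact ⟨y + z, (K i).add_mem hy hz, h12 (mk_mem_prod hyV hzV)⟩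
  neg_mem' := by
    intro a ha V hV
    filter_upwards [ha _ (continuous_neg.tendsto a hV)] with i hi
    obtain ⟨y, hy, hyV⟩ := hi
    exact ⟨-y, (K i).neg_mem hy, hyV⟩

lemma mem_ultraLim {G ι : Type*} [AddCommGroup G] [TopologicalSpace G] [IsTopologicalAddGroup G]
    (F : Ultrafilter ι) (K : ι → AddSubgroup G) (x : G) :
    x ∈ ultraLim F K ↔ ∀ V ∈ 𝓝 x, ∀ᶠ i in F, ∃ y ∈ K i, y ∈ V := Iff.rfl

lemma isClosed_ultraLim {G ι : Type*} [AddCommGroup G] [TopologicalSpace G]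
    [IsTopologicalAddGroup G] (F : Ultrafilter ι) (K : ι → AddSubgroup G) :
    IsClosed (ultraLim F K : Set G) := by
  refine isClosed_of_closure_subset fun x hx V hV => ?_
  obtain ⟨W, hWV, hW, hxW⟩ := mem_nhds_iff.mp hV
  obtain ⟨y, hyW, hy⟩ := mem_closure_iff.mp hx W hW hxW
  filter_upwards [hy W (hW.mem_nhds hyW)] with i hi
  obtain ⟨z, hz, hzW⟩ := hi
  exact ⟨z, hz, hWV hzW⟩

lemma eventually_subset_ultraLim {G ι : Type*} [AddCommGroup G] [TopologicalSpace G]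
    [IsTopologicalAddGroup G] [CompactSpace G] (F : Ultrafilter ι) (K : ι → AddSubgroup G)
    (N : Set G) (hN : IsOpen N) (h : (ultraLim F K : Set G) ⊆ N) :
    ∀ᶠ i in F, (K i : Set G) ⊆ N := by
  by_contra hc
  rw [← Ultrafilter.eventually_not] at hc
  have hc' : ∀ᶠ i in F, ∃ y, y ∈ K i ∧ y ∉ N := by
    filter_upwards [hc] with i hi
    exact Set.not_subset.mp hi
  have : ∀ i, ∃ y, (∃ y, y ∈ K i ∧ y ∉ N) → (y ∈ K i ∧ y ∉ N) := by
    intro i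
    by_cases hi : ∃ y, y ∈ K i ∧ y ∉ N
    · exact ⟨hi.choose, fun _ => hi.choose_spec⟩
    · exact ⟨0, fun h => absurd h hi⟩
  choose y hy using this
  have hy' : ∀ᶠ i in F, y i ∈ K i ∧ y i ∉ N := hc'.mono fun i hi => hy i hi
  obtain ⟨x, hx, hxF⟩ := hN.isClosed_compl.isCompact.ultrafilter_le_nhds (F.map y)
    (by
      rw [le_principal_iff]
      exact hy'.mono fun i hi => hi.2)
  refine hx (h ?_)
  intro V hV
  have : ∀ᶠ i in F, y i ∈ V := hxF hV
  filter_upwards [this, hy'] with i h1 h2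
  exact ⟨y i, h2.1, h1⟩

/-- Lawrence's theorem: for a closed subgroup `T` of a finite-dimensional torus and an
open subset `U` of `T`, there are only finitely many maximal closed subgroups of `T`
disjoint from `U`. -/
theorem lawrence_finitely_many_maximal_subgroups (n : ℕ)
    (T : AddSubgroup (Fin n → AddCircle (1 : ℝ)))
    (hT : IsClosed (T : Set (Fin n → AddCircle (1 : ℝ))))
    (U : Set T) (hU : IsOpen U) :
    {L : AddSubgroup T | IsClosed (L : Set T) ∧ Disjoint (L : Set T) U ∧
      ∀ L' : AddSubgroup T, IsClosed (L' : Set T) → Disjoint (L' : Set T) U →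
        L ≤ L' → L' = L}.Finite := by
  by_contra hinf
  set S := {L : AddSubgroup T | IsClosed (L : Set T) ∧ Disjoint (L : Set T) U ∧
      ∀ L' : AddSubgroup T, IsClosed (L' : Set T) → Disjoint (L' : Set T) U →
        L ≤ L' → L' = L} with hS
  have : Infinite S := Set.infinite_coe_iff.mpr hinf
  have : CompactSpace T := isCompact_iff_compactSpace.mp hT.isCompact
  let F : Ultrafilter S := hyperfilter S
  let K : S → AddSubgroup T := fun i => i.1
  have hLc : IsClosed (ultraLim F K : Set T) := isClosed_ultraLim F K
  have hLd : Disjoint (ultraLim F K : Set T) U := by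
    rw [Set.disjoint_left]
    intro x hx hxU
    obtain ⟨i, y, hy, hyU⟩ := (hx U (hU.mem_nhds hxU)).exists
    exact Set.disjoint_left.mp i.2.2.1 hy hyU
  obtain ⟨N, hN, hLN, hNK⟩ := exists_nhd_of_closed ((ultraLim F K).map T.subtype)
    (by
      rw [AddSubgroup.coe_map]
      exact hT.isClosedEmbedding_subtypeVal.isClosedMap _ hLc)
  have hev := eventually_subset_ultraLim F K (Subtype.val ⁻¹' N)
    (hN.preimage continuous_subtype_val) (fun x hx => hLN ⟨x, hx, rfl⟩)
  have hev2 : ∀ᶠ i in F, K i = ultraLim F K := by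
    filter_upwards [hev] with i hi
    refine (i.2.2.2 _ hLc hLd ?_).symm
    have h1 : (K i).map T.subtype ≤ (ultraLim F K).map T.subtype := by
      apply hNK
      rintro _ ⟨x, hx, rfl⟩
      exact hi hx
    exact (AddSubgroup.map_le_map_iff_of_injective T.subtype_injective).mp h1
  have hfin : {i : S | (i : AddSubgroup T) = ultraLim F K}.Finite := by
    refine Set.Subsingleton.finite ?_
    intro i hi j hj
    exact Subtype.ext (hi.trans hj.symm)
  exact hfin.notMem_hyperfilter hev2
end
end

section
/- For every point x in the open standard simplex Δ = {x ∈ ℝ^k : x_i > 0, Σx_i < 1} that is a torsion point of T^k = ℝ^k/ℤ^k of order > 1 under the quotient map, if the finite cyclic subgroup generated by x meets the (image of the) open simplex only in x itself, then x belongs to a finite set depending only on k. -/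
open Set

noncomputable section

/-- The open standard simplex in `ℝ^k`. -/
def openSimplex (k : ℕ) : Set (Fin k → ℝ) := {x | (∀ i, 0 < x i) ∧ ∑ i, x i < 1}

/-- The quotient map `ℝ^k → T^k = ℝ^k/ℤ^k`. -/
def tor {k : ℕ} (x : Fin k → ℝ) : Fin k → AddCircle (1 : ℝ) := fun i => (x i : AddCircle (1 : ℝ))

theorem aux_dirichlet (n : ℕ) (ε : ℝ) (hε : 0 < ε) : ∃ Q : ℕ, ∀ v : Fin n → ℝ,
    ∃ m : ℕ, 1 ≤ m ∧ m ≤ Q ∧ ∃ p : Fin n → ℤ, ∀ i, |m * v i - p i| < ε := by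
  obtain ⟨K, hK⟩ := exists_nat_gt (1 / ε)
  have hKpos : (0 : ℝ) < K := lt_trans (by positivity) hK
  have hKε : 1 < ε * K := by
    rw [div_lt_iff₀ hε] at hK; linarith
  refine ⟨K ^ n, fun v => ?_⟩
  let f : ℕ → (Fin n → ℤ) := fun m i => ⌊(K : ℝ) * Int.fract (m * v i)⌋
  let T : Finset (Fin n → ℤ) := Fintype.piFinset fun _ => Finset.Ico (0 : ℤ) K
  have hT : T.card = K ^ n := by
    simp [T, Fintype.card_piFinset]
  obtain ⟨a, ha, b, hb, hab, hf⟩ := Finset.exists_ne_map_eq_of_card_lt_of_maps_to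
    (s := Finset.range (K ^ n + 1)) (t := T) (f := f) (by rw [hT]; simp) (by
      intro m _
      simp only [T, f, Finset.mem_coe, Fintype.mem_piFinset, Finset.mem_Ico]
      intro i
      have h0 := Int.fract_nonneg ((m : ℝ) * v i)
      have h1 := Int.fract_lt_one ((m : ℝ) * v i)
      constructor
      · apply Int.floor_nonneg.2; positivity
      · rw [Int.floor_lt]; push_cast; nlinarith)
  have main : ∀ a b : ℕ, a < b → b < K ^ n + 1 → f a = f b →
      ∃ m : ℕ, 1 ≤ m ∧ m ≤ K ^ n ∧ ∃ p : Fin n → ℤ, ∀ i, |m * v i - p i| < ε := by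
    intro a b hab hb hf
    refine ⟨b - a, by omega, by omega, fun i => ⌊(b : ℝ) * v i⌋ - ⌊(a : ℝ) * v i⌋, fun i => ?_⟩
    have h := Int.abs_sub_lt_one_of_floor_eq_floor (congrFun hf i)
    have e : ((b - a : ℕ) : ℝ) * v i - ((⌊(b : ℝ) * v i⌋ - ⌊(a : ℝ) * v i⌋ : ℤ) : ℝ)
        = Int.fract ((b : ℝ) * v i) - Int.fract ((a : ℝ) * v i) := by
      rw [Nat.cast_sub hab.le]; unfold Int.fract; push_cast; ring
    rw [e]
    rw [abs_lt] at h ⊢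
    constructor
    · by_contra! hc; nlinarith
    · by_contra! hc; nlinarith
  simp only [Finset.mem_range] at ha hb
  rcases lt_or_gt_of_ne hab with h | h
  · exact main a b h hb hf
  · exact main b a h ha hf.symm

/-- Barycentric version of isolation. -/
def IsoBary {n : ℕ} (b : Fin n → ℝ) : Prop :=
  (∀ i, 0 < b i) ∧ ∑ i, b i = 1 ∧ ∀ (y : Fin n → ℝ) (m : ℕ) (p : Fin n → ℤ),
    (∀ i, 0 < y i) → ∑ i, y i = 1 → (∀ i, y i = b i + (m * b i - p i)) → y = b

theorem aux_key (n : ℕ) (δ : ℝ) (hδ : 0 < δ) : ∃ (η : ℝ) (Q : ℕ), 0 < η ∧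
    ∀ b : Fin n → ℝ, IsoBary b → (∀ i, δ ≤ b i ∨ b i < η) →
      (∀ i, δ ≤ b i) ∧ ∃ m : ℕ, 1 ≤ m ∧ m ≤ Q ∧ ∀ i, ∃ p : ℤ, m * b i = p := by
  set ε : ℝ := min δ (1 / (n + 1)) with hεd
  have hε : 0 < ε := lt_min hδ (by positivity)
  have hεδ : ε ≤ δ := min_le_left _ _
  have hεn : n * ε < 1 := by
    have h1 : ε ≤ 1 / (n + 1) := min_le_right _ _
    rw [le_div_iff₀ (by positivity)] at h1
    nlinarith
  obtain ⟨Q, hQ⟩ := aux_dirichlet n ε hε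
  refine ⟨ε / (Q + 1), Q, by positivity, ?_⟩
  rintro b ⟨hb, hs, hiso⟩ hor
  obtain ⟨m, hm1, hmQ, p, hp⟩ := hQ b
  have hm1' : (1 : ℝ) ≤ m := by exact_mod_cast hm1
  have hmQ' : (m : ℝ) ≤ Q := by exact_mod_cast hmQ
  let q : Fin n → ℤ := fun i => if δ ≤ b i then p i else 0
  have hsmall : ∀ i, ¬ δ ≤ b i → m * b i < ε := by
    intro i hi
    have h := (hor i).resolve_left hi
    rw [lt_div_iff₀ (by positivity)] at h
    nlinarith [hb i]
  have hd : ∀ i, |m * b i - q i| < ε := by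
    intro i
    by_cases h : δ ≤ b i
    · simpa [q, h] using hp i
    · have := hsmall i h
      have h2 : 0 < m * b i := mul_pos (by linarith) (hb i)
      simp only [q, h, if_false, Int.cast_zero, sub_zero]
      rw [abs_of_pos h2]; exact this
  have hsum : ∑ i, (m * b i - q i) = 0 := by
    have e : ∑ i, (m * b i - q i) = ((m - ∑ i, q i : ℤ) : ℝ) := by
      rw [Finset.sum_sub_distrib, ← Finset.mul_sum, hs]; push_cast; ring
    have hlt : |∑ i, (m * b i - q i)| < 1 := by
      calc |∑ i, (m * b i - q i)| ≤ ∑ i, |m * b i - q i| := Finset.abs_sum_le_sum_abs _ _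
        _ ≤ ∑ i : Fin n, ε := Finset.sum_le_sum fun i _ => (hd i).le
        _ = n * ε := by simp
        _ < 1 := hεn
    rw [e] at hlt ⊢
    have : |(m - ∑ i, q i : ℤ)| < 1 := by exact_mod_cast hlt
    rw [Int.abs_lt_one_iff] at this
    rw [this]; simp
  have hy := hiso (fun i => b i + (m * b i - q i)) m q (by
      intro i
      by_cases h : δ ≤ b i
      · have := (abs_lt.1 (hd i)).1
        linarith
      · simp only [q, h, if_false, Int.cast_zero, sub_zero]
        have h2 : 0 < m * b i := mul_pos (by linarith) (hb i)
        linarith [hb i]) (by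
      rw [Finset.sum_add_distrib, hsum, hs]; ring) (fun i => rfl)
  have hz : ∀ i, m * b i = q i := by
    intro i
    have := congrFun hy i
    linarith
  refine ⟨?_, m, hm1, hmQ, fun i => ⟨q i, hz i⟩⟩
  intro i
  by_contra h
  have h1 := hz i
  simp only [q, h, if_false, Int.cast_zero] at h1
  have h2 : 0 < m * b i := mul_pos (by linarith) (hb i)
  linarith

theorem aux_chain (n j : ℕ) (hj : j ≤ n) : ∃ δ : ℝ, 0 < δ ∧ ∀ b : Fin n → ℝ, IsoBary b →
    j ≤ (Finset.univ.filter fun i => δ ≤ b i).card := by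
  induction j with
  | zero => exact ⟨1, one_pos, fun _ _ => Nat.zero_le _⟩
  | succ j ih =>
    obtain ⟨δ, hδ, h⟩ := ih (by omega)
    obtain ⟨η, Q, hη, hk⟩ := aux_key n δ hδ
    refine ⟨min δ η, lt_min hδ hη, fun b hb => ?_⟩
    have hsub : (Finset.univ.filter fun i => δ ≤ b i) ⊆
        (Finset.univ.filter fun i => min δ η ≤ b i) := by
      intro i hi
      simp only [Finset.mem_filter, Finset.mem_univ, true_and] at hi ⊢
      exact (min_le_left _ _).trans hi
    by_cases hor : ∀ i, δ ≤ b i ∨ b i < η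
    · have hall := (hk b hb hor).1
      rw [Finset.filter_true_of_mem (fun i _ => (min_le_left _ _).trans (hall i))]
      simpa using hj
    · push Not at hor
      obtain ⟨i, hi1, hi2⟩ := hor
      refine lt_of_le_of_lt (h b hb) (Finset.card_lt_card ⟨hsub, fun hc => ?_⟩)
      have := @hc i (by simp [hi2])
      simp only [Finset.mem_filter, Finset.mem_univ, true_and] at this
      linarith

theorem aux_bound (n : ℕ) : ∃ Q : ℕ, ∀ b : Fin n → ℝ, IsoBary b →
    ∃ m : ℕ, 1 ≤ m ∧ m ≤ Q ∧ ∀ i, ∃ p : ℤ, m * b i = p := by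
  obtain ⟨δ, hδ, h⟩ := aux_chain n n le_rfl
  obtain ⟨η, Q, hη, hk⟩ := aux_key n δ hδ
  refine ⟨Q, fun b hb => (hk b hb fun i => Or.inl ?_).2⟩
  have h1 : (Finset.univ.filter fun i => δ ≤ b i) = Finset.univ := by
    apply Finset.eq_univ_of_card
    apply le_antisymm (Finset.card_le_univ _)
    simpa using h b hb
  have := Finset.mem_univ i
  rw [← h1] at this
  simpa using this

theorem aux_iso {k : ℕ} (x : Fin k → ℝ) (hx : x ∈ openSimplex k)
    (h : (AddSubgroup.zmultiples (tor x) : Set (Fin k → AddCircle (1 : ℝ))) ∩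
          (tor '' openSimplex k) ⊆ {tor x}) :
    IsoBary (Fin.cons (1 - ∑ i, x i) x : Fin (k + 1) → ℝ) := by
  obtain ⟨hx0, hx1⟩ := hx
  refine ⟨?_, ?_, ?_⟩
  · intro i
    refine Fin.cases ?_ (fun i => ?_) i
    · simpa using hx1
    · simpa using hx0 i
  · rw [Fin.sum_univ_succ]; simp
  · intro y m p hy hys hyp
    rw [Fin.sum_univ_succ] at hys
    have hlt : ∀ i : Fin k, y i.succ < 1 := by
      intro i
      have := Finset.single_le_sum (f := fun i : Fin k => y i.succ)
        (fun i _ => (hy i.succ).le) (Finset.mem_univ i)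
      linarith [hy 0]
    have hxlt : ∀ i : Fin k, x i < 1 := by
      intro i
      have := Finset.single_le_sum (f := x) (fun i _ => (hx0 i).le) (Finset.mem_univ i)
      linarith
    have hmem : tor (fun i : Fin k => y i.succ) ∈ ({tor x} : Set (Fin k → AddCircle (1 : ℝ))) := by
      apply h
      refine ⟨?_, _, ⟨fun i => hy i.succ, by linarith [hy 0]⟩, rfl⟩
      refine ⟨((m + 1 : ℕ) : ℤ), ?_⟩
      funext i
      have e := hyp i.succ
      simp only [Fin.cons_succ] at e
      simp only [tor, Pi.smul_apply]
      rw [← AddCircle.coe_zsmul, eq_comm, ← sub_eq_zero, ← AddCircle.coe_sub,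
        AddCircle.coe_eq_zero_iff]
      refine ⟨-p i.succ, ?_⟩
      rw [e]
      simp only [zsmul_eq_mul]
      push_cast
      ring
    have heq : ∀ i : Fin k, y i.succ = x i := by
      intro i
      have e := congrFun (Set.mem_singleton_iff.1 hmem) i
      simp only [tor] at e
      rw [← sub_eq_zero, ← AddCircle.coe_sub, AddCircle.coe_eq_zero_iff] at e
      obtain ⟨z, hz⟩ := e
      simp only [zsmul_eq_mul, mul_one] at hz
      have h1 : |(z : ℝ)| < 1 := by
        rw [hz, abs_lt]
        constructor <;> linarith [hy i.succ, hx0 i, hlt i, hxlt i]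
      have h2 : |z| < 1 := by exact_mod_cast h1
      rw [Int.abs_lt_one_iff] at h2
      rw [h2] at hz
      simp only [Int.cast_zero] at hz
      linarith
    funext i
    refine Fin.cases ?_ (fun i => ?_) i
    · simp only [heq] at hys
      simp only [Fin.cons_zero]
      linarith
    · simpa using heq i

/-- Simplex reformulation of Hensley's theorem (case `ε = 1`): there are only finitely
many torsion points `x` of order `> 1` in the open standard simplex whose generated
cyclic subgroup meets the simplex only in `x`. -/
theorem finitely_many_isolated_torsion_points (k : ℕ) :
    ∃ F : Set (Fin k → ℝ), F.Finite ∧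
      ∀ x ∈ openSimplex k, 1 < addOrderOf (tor x) →
        ((AddSubgroup.zmultiples (tor x) : Set (Fin k → AddCircle (1 : ℝ))) ∩
          (tor '' openSimplex k) ⊆ {tor x}) →
        x ∈ F := by
  obtain ⟨Q, hQ⟩ := aux_bound (k + 1)
  let A : Set ℝ := (fun q : ℤ × ℕ => (q.1 : ℝ) / q.2) '' (Set.Icc (0 : ℤ) Q ×ˢ Set.Icc 0 Q)
  have hA : A.Finite := ((Set.finite_Icc _ _).prod (Set.finite_Icc _ _)).image _
  refine ⟨Set.pi Set.univ fun _ => A, Set.Finite.pi fun _ => hA, ?_⟩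
  intro x hx _ h i _
  obtain ⟨m, hm1, hmQ, hp⟩ := hQ _ (aux_iso x hx h)
  obtain ⟨p, hp⟩ := hp i.succ
  simp only [Fin.cons_succ] at hp
  have hxi := hx.1 i
  have hxlt : x i < 1 := by
    have := Finset.single_le_sum (f := x) (fun i _ => (hx.1 i).le) (Finset.mem_univ i)
    linarith [hx.2]
  have hm1' : (1 : ℝ) ≤ m := by exact_mod_cast hm1
  have hmQ' : (m : ℝ) ≤ Q := by exact_mod_cast hmQ
  refine ⟨(p, m), ⟨⟨?_, ?_⟩, Nat.zero_le _, hmQ⟩, ?_⟩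
  · have : (0 : ℝ) ≤ p := by rw [← hp]; positivity
    exact_mod_cast this
  · have : (p : ℝ) ≤ Q := by rw [← hp]; nlinarith
    exact_mod_cast this
  · simp only
    rw [← hp]; field_simp
end
end

section
/- Up to lattice equivalence, there are exactly 5 smooth 2-dimensional reflexive polygons, i.e., convex lattice polygons P ⊂ ℝ^2 with 0 in the interior, whose only interior lattice point is 0, and such that the primitive ray generators of each pair of adjacent vertices form a ℤ-basis of ℤ^2 (these correspond to ℙ^1×ℙ^1 and ℙ^2 blown up in at most 3 torus-fixed points). -/
open Set

noncomputable section

/-- A smooth reflexive polygon: a convex lattice polygon with `0` as its only interior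
lattice point, such that each pair of adjacent vertices (vertices joined by an edge on
the boundary) forms a `ℤ`-basis of `ℤ^2`. -/
def SmoothReflexivePolygon (Q : Set (Fin 2 → ℝ)) : Prop :=
  (∃ V : Finset (Fin 2 → ℤ), Q = convexHull ℝ (castZ '' (V : Set (Fin 2 → ℤ)))) ∧
  (0 : Fin 2 → ℝ) ∈ interior Q ∧
  interior Q ∩ latPts 2 = {0} ∧
  ∀ v w : Fin 2 → ℤ,
    castZ v ∈ Q.extremePoints ℝ → castZ w ∈ Q.extremePoints ℝ → v ≠ w →
    segment ℝ (castZ v) (castZ w) ⊆ frontier Q →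
    IsUnit (v 0 * w 1 - v 1 * w 0)

/-- Linear lattice equivalence by `GL_2(ℤ)`. -/
def LinEquiv (Q R : Set (Fin 2 → ℝ)) : Prop :=
  ∃ A B : Matrix (Fin 2) (Fin 2) ℤ, A * B = 1 ∧ B * A = 1 ∧
    R = (fun x : Fin 2 → ℝ => fun i => ∑ j, (A i j : ℝ) * x j) '' Q

theorem eq_zero_of_conv {p q s t : ℝ} (hp : 0 < p) (hq : 0 < q) (hs : 0 ≤ s) (ht : 0 ≤ t)
    (h : p * s + q * t = 0) : s = 0 := by
  have h1 := mul_nonneg hp.le hs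
  have h2 := mul_nonneg hq.le ht
  have h3 : p * s = 0 := by linarith
  rcases mul_eq_zero.1 h3 with h | h
  · exact absurd h hp.ne'
  · exact h

theorem ext_of_lex {Q : Set (Fin 2 → ℝ)} {a b c d : ℝ} (hD : a * d - b * c ≠ 0)
    {v : Fin 2 → ℝ} (hv : v ∈ Q) (h1 : ∀ x ∈ Q, a * x 0 + b * x 1 ≤ a * v 0 + b * v 1)
    (h2 : ∀ x ∈ Q, a * x 0 + b * x 1 = a * v 0 + b * v 1 →
      c * x 0 + d * x 1 ≤ c * v 0 + d * v 1) : v ∈ Q.extremePoints ℝ := by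
  rw [mem_extremePoints_iff_left]
  refine ⟨hv, ?_⟩
  rintro x hx y hy ⟨p, q, hp, hq, hpq, hxy⟩
  have e0 : p * x 0 + q * y 0 = v 0 := by rw [← hxy]; simp
  have e1 : p * x 1 + q * y 1 = v 1 := by rw [← hxy]; simp
  have hq' : q = 1 - p := by linarith
  have fx : a * v 0 + b * v 1 - (a * x 0 + b * x 1) = 0 := by
    refine eq_zero_of_conv hp hq (sub_nonneg.2 (h1 x hx)) (sub_nonneg.2 (h1 y hy)) ?_
    rw [← e0, ← e1, hq']; ring
  have fy : a * v 0 + b * v 1 - (a * y 0 + b * y 1) = 0 := by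
    refine eq_zero_of_conv hq hp (sub_nonneg.2 (h1 y hy)) (sub_nonneg.2 (h1 x hx)) ?_
    rw [← e0, ← e1, hq']; ring
  have gx : c * v 0 + d * v 1 - (c * x 0 + d * x 1) = 0 := by
    refine eq_zero_of_conv hp hq (sub_nonneg.2 (h2 x hx (by linarith)))
      (sub_nonneg.2 (h2 y hy (by linarith))) ?_
    rw [← e0, ← e1, hq']; ring
  have k0 : (a * d - b * c) * (x 0 - v 0) = 0 := by linear_combination -d * fx + b * gx
  have k1 : (a * d - b * c) * (x 1 - v 1) = 0 := by linear_combination c * fx - a * gx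
  have k0' := (mul_eq_zero.1 k0).resolve_left hD
  have k1' := (mul_eq_zero.1 k1).resolve_left hD
  ext i; fin_cases i
  · simp; linarith
  · simp; linarith

theorem lat_ext {Q : Set (Fin 2 → ℝ)} (hQ : SmoothReflexivePolygon Q) {u : Fin 2 → ℤ}
    (hu : castZ u ∈ Q) (hu0 : u ≠ 0) : castZ u ∈ Q.extremePoints ℝ := by
  obtain ⟨⟨V, hV⟩, h0, hint, hadj⟩ := hQ
  have hfin : (castZ '' (V : Set (Fin 2 → ℤ))).Finite := V.finite_toSet.image _
  have hconv : Convex ℝ Q := hV ▸ convex_convexHull ℝ _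
  have hcomp : IsCompact Q := hV ▸ hfin.isCompact_convexHull ℝ
  have hextV : ∀ x ∈ Q.extremePoints ℝ, ∃ v : Fin 2 → ℤ, castZ v = x := by
    intro x hx
    rw [hV] at hx
    obtain ⟨v, -, h⟩ := extremePoints_convexHull_subset (𝕜 := ℝ) hx
    exact ⟨v, h⟩
  have hni : castZ u ∉ interior Q := by
    intro h
    have : castZ u ∈ interior Q ∩ latPts 2 := ⟨h, ⟨u, rfl⟩⟩
    rw [hint] at this
    apply hu0
    ext i
    have := congrFun this i
    simpa [castZ] using this
  obtain ⟨f, hf⟩ := geometric_hahn_banach_open_point hconv.interior isOpen_interior hni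
  obtain ⟨a, b, hab⟩ : ∃ a b : ℝ, ∀ x, f x = a * x 0 + b * x 1 := by
    refine ⟨f (Pi.single 0 1), f (Pi.single 1 1), fun x => ?_⟩
    have : x = x 0 • (Pi.single 0 1 : Fin 2 → ℝ) + x 1 • (Pi.single 1 1 : Fin 2 → ℝ) := by
      ext i; fin_cases i <;> simp
    conv_lhs => rw [this]
    simp [mul_comm]
  have hD : a * a + b * b ≠ 0 := by
    intro h
    have ha : a = 0 := by nlinarith [mul_self_nonneg a, mul_self_nonneg b]
    have hb : b = 0 := by nlinarith [mul_self_nonneg a, mul_self_nonneg b]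
    have := hf 0 h0
    simp [hab, ha, hb] at this
  have hle : ∀ x ∈ Q, f x ≤ f (castZ u) := by
    have hcl : closure (interior Q) ⊆ {x | f x ≤ f (castZ u)} :=
      closure_minimal (fun x hx => (hf x hx).le) (isClosed_le f.continuous continuous_const)
    rw [hconv.closure_interior_eq_closure_of_nonempty_interior ⟨0, h0⟩] at hcl
    exact fun x hx => hcl (subset_closure hx)
  have hFr : ∀ x ∈ Q, f x = f (castZ u) → x ∈ frontier Q := by
    intro x hx hfx
    refine ⟨subset_closure hx, fun hi => ?_⟩
    exact (hf x hi).ne hfx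
  let F : Set (Fin 2 → ℝ) := Q ∩ {x | f x = f (castZ u)}
  have hFc : IsCompact F := hcomp.inter_right (isClosed_eq f.continuous continuous_const)
  have hFn : F.Nonempty := ⟨castZ u, hu, rfl⟩
  have hgc : Continuous (fun x : Fin 2 → ℝ => -b * x 0 + a * x 1) := by fun_prop
  obtain ⟨v, hvF, hv⟩ := hFc.exists_isMaxOn hFn hgc.continuousOn
  obtain ⟨w, hwF, hw⟩ := hFc.exists_isMinOn hFn hgc.continuousOn
  have hve : v ∈ Q.extremePoints ℝ := by
    refine ext_of_lex (a := a) (b := b) (c := -b) (d := a) (by ring_nf; ring_nf at hD; exact hD)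
      hvF.1 ?_ ?_
    · intro x hx
      have := hle x hx
      rw [← show f v = f (castZ u) from hvF.2] at this
      simpa [hab] using this
    · intro x hx hfx
      refine hv (⟨hx, ?_⟩ : x ∈ F)
      rw [mem_ofPred_eq, ← show f v = f (castZ u) from hvF.2, hab, hab, hfx]
  have hwe : w ∈ Q.extremePoints ℝ := by
    refine ext_of_lex (a := a) (b := b) (c := b) (d := -a)
      (by intro h; apply hD; linarith) hwF.1 ?_ ?_
    · intro x hx
      have := hle x hx
      rw [← show f w = f (castZ u) from hwF.2] at this
      simpa [hab] using this
    · intro x hx hfx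
      have := hw (⟨hx, by
        rw [mem_ofPred_eq, ← show f w = f (castZ u) from hwF.2, hab, hab, hfx]⟩ : x ∈ F)
      simp only [mem_ofPred_eq] at this
      linarith
  have hvu := hv (⟨hu, rfl⟩ : castZ u ∈ F)
  have hwu := hw (⟨hu, rfl⟩ : castZ u ∈ F)
  simp only [mem_ofPred_eq] at hvu hwu
  have fv : a * v 0 + b * v 1 = a * castZ u 0 + b * castZ u 1 := by
    have := hvF.2; simpa [hab] using this
  have fw : a * w 0 + b * w 1 = a * castZ u 0 + b * castZ u 1 := by
    have := hwF.2; simpa [hab] using this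
  have key : ∀ z z' : Fin 2 → ℝ, a * z 0 + b * z 1 = a * z' 0 + b * z' 1 →
      -b * z 0 + a * z 1 = -b * z' 0 + a * z' 1 → z = z' := by
    intro z z' e e'
    have k0 : (a * a + b * b) * (z 0 - z' 0) = 0 := by linear_combination a * e - b * e'
    have k1 : (a * a + b * b) * (z 1 - z' 1) = 0 := by linear_combination b * e + a * e'
    have k0' := (mul_eq_zero.1 k0).resolve_left hD
    have k1' := (mul_eq_zero.1 k1).resolve_left hD
    ext i; fin_cases i
    · simp; linarith
    · simp; linarith
  by_contra hcon
  have hvu' : -b * castZ u 0 + a * castZ u 1 < -b * v 0 + a * v 1 := by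
    refine lt_of_le_of_ne hvu fun h => hcon ?_
    rw [key (castZ u) v fv.symm h]; exact hve
  have hwu' : -b * w 0 + a * w 1 < -b * castZ u 0 + a * castZ u 1 := by
    refine lt_of_le_of_ne hwu fun h => hcon ?_
    rw [← key w (castZ u) fw h]; exact hwe
  set gu := -b * castZ u 0 + a * castZ u 1 with hgu
  set gv := -b * v 0 + a * v 1 with hgv
  set gw := -b * w 0 + a * w 1 with hgw
  have hpos : 0 < gv - gw := by linarith
  let t := (gu - gw) / (gv - gw)
  have ht0 : 0 < t := div_pos (by linarith) hpos
  have ht1 : t < 1 := (div_lt_one hpos).2 (by linarith)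
  have htm : t * (gv - gw) = gu - gw := div_mul_cancel₀ _ hpos.ne'
  have hut : castZ u = t • v + (1 - t) • w := by
    apply key
    · simp only [Pi.add_apply, Pi.smul_apply, smul_eq_mul]
      linear_combination -t * fv - (1 - t) * fw
    · simp only [Pi.add_apply, Pi.smul_apply, smul_eq_mul]
      rw [← hgu]
      rw [hgv, hgw] at htm
      linear_combination -htm
  obtain ⟨v', rfl⟩ := hextV v hve
  obtain ⟨w', rfl⟩ := hextV w hwe
  have hne : v' ≠ w' := by
    rintro rfl
    linarith
  have hseg : segment ℝ (castZ v') (castZ w') ⊆ frontier Q := by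
    intro x hx
    refine hFr x (hconv.segment_subset hvF.1 hwF.1 hx) ?_
    obtain ⟨p, q, hp, hq, hpq, rfl⟩ := hx
    have e1 : f (castZ v') = f (castZ u) := hvF.2
    have e2 : f (castZ w') = f (castZ u) := hwF.2
    rw [map_add, map_smul, map_smul, e1, e2, ← add_smul, hpq, one_smul]
  have hunit := hadj v' w' hve hwe hne hseg
  have u0 : (u 0 : ℝ) = t * v' 0 + (1 - t) * w' 0 := by
    have := congrFun hut 0; simpa [castZ] using this
  have u1 : (u 1 : ℝ) = t * v' 1 + (1 - t) * w' 1 := by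
    have := congrFun hut 1; simpa [castZ] using this
  have hd : ((u 0 * w' 1 - u 1 * w' 0 : ℤ) : ℝ) = t * ((v' 0 * w' 1 - v' 1 * w' 0 : ℤ) : ℝ) := by
    push_cast; rw [u0, u1]; ring
  rcases Int.isUnit_iff.1 hunit with h | h
  · rw [h] at hd
    have a1 : (0:ℝ) < ((u 0 * w' 1 - u 1 * w' 0 : ℤ) : ℝ) := by rw [hd]; push_cast; linarith
    have a2 : ((u 0 * w' 1 - u 1 * w' 0 : ℤ) : ℝ) < 1 := by rw [hd]; push_cast; linarith
    have a1' : 0 < u 0 * w' 1 - u 1 * w' 0 := by exact_mod_cast a1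
    have a2' : u 0 * w' 1 - u 1 * w' 0 < 1 := by exact_mod_cast a2
    omega
  · rw [h] at hd
    have a1 : ((u 0 * w' 1 - u 1 * w' 0 : ℤ) : ℝ) < 0 := by rw [hd]; push_cast; linarith
    have a2 : -1 < ((u 0 * w' 1 - u 1 * w' 0 : ℤ) : ℝ) := by rw [hd]; push_cast; linarith
    have a1' : u 0 * w' 1 - u 1 * w' 0 < 0 := by exact_mod_cast a1
    have a2' : -1 < u 0 * w' 1 - u 1 * w' 0 := by exact_mod_cast a2
    omega

theorem castZ_inj_s19 {u v : Fin 2 → ℤ} (h : castZ u = castZ v) : u = v := by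
  ext i
  have := congrFun h i
  simpa [castZ] using this

def dt (u v : Fin 2 → ℤ) : ℤ := u 0 * v 1 - u 1 * v 0

theorem tri_pt {Q : Set (Fin 2 → ℝ)} (hQ : SmoothReflexivePolygon Q) {u v p : Fin 2 → ℤ}
    (hu : castZ u ∈ Q) (hv : castZ v ∈ Q) (hp : p ≠ 0) (α β : ℝ) (hα : 0 ≤ α) (hβ : 0 ≤ β)
    (hab : α + β ≤ 1) (h : castZ p = α • castZ u + β • castZ v) : p = u ∨ p = v := by
  have hconv : Convex ℝ Q := by
    obtain ⟨⟨V, hV⟩, -⟩ := hQ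
    exact hV ▸ convex_convexHull ℝ _
  have h0 : (0 : Fin 2 → ℝ) ∈ Q := interior_subset hQ.2.1
  set T : Set (Fin 2 → ℝ) := {0, castZ u, castZ v} with hT
  have hTQ : convexHull ℝ T ⊆ Q := by
    refine convexHull_min ?_ hconv
    rintro x (rfl | rfl | rfl) <;> assumption
  have hpT : castZ p ∈ convexHull ℝ T := by
    have hc := convex_convexHull ℝ T
    have m0 : (0 : Fin 2 → ℝ) ∈ convexHull ℝ T := subset_convexHull ℝ T (by simp [hT])
    have mu : castZ u ∈ convexHull ℝ T := subset_convexHull ℝ T (by simp [hT])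
    have mv : castZ v ∈ convexHull ℝ T := subset_convexHull ℝ T (by simp [hT])
    have := hc.sum_mem (t := Finset.univ) (w := ![1 - α - β, α, β]) (z := ![0, castZ u, castZ v])
      (by intro i _; fin_cases i <;> simp <;> linarith) (by simp [Fin.sum_univ_three]; ring)
      (by intro i _; fin_cases i <;> simp <;> assumption)
    simpa [Fin.sum_univ_three, ← h] using this
  have hpe := lat_ext hQ (hTQ hpT) hp
  have h2 := extremePoints_convexHull_subset (𝕜 := ℝ)
    (inter_extremePoints_subset_extremePoints_of_subset hTQ ⟨hpT, hpe⟩)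
  rcases h2 with h2 | h2 | h2
  · exact absurd (castZ_inj_s19 (v := 0) (h2.trans (by ext i; simp [castZ]))) hp
  · exact Or.inl (castZ_inj_s19 h2)
  · exact Or.inr (castZ_inj_s19 h2)

theorem prim_pt {Q : Set (Fin 2 → ℝ)} (hQ : SmoothReflexivePolygon Q) {u : Fin 2 → ℤ}
    (hu : castZ u ∈ Q) (hu0 : u ≠ 0) : ∃ r : Fin 2 → ℤ, dt u r = 1 := by
  have hg0 : 0 < Int.gcd (u 0) (u 1) := by
    rw [Nat.pos_iff_ne_zero]
    intro h
    rw [Int.gcd_eq_zero_iff] at h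
    apply hu0
    ext i; fin_cases i
    · exact h.1
    · exact h.2
  have hg : Int.gcd (u 0) (u 1) = 1 := by
    obtain ⟨x, hx⟩ := Int.gcd_dvd_left (u 0) (u 1)
    obtain ⟨y, hy⟩ := Int.gcd_dvd_right (u 0) (u 1)
    generalize Int.gcd (u 0) (u 1) = g at *
    have hgr : (1 : ℝ) ≤ (g : ℝ) := by exact_mod_cast hg0
    have hx' : (u 0 : ℝ) = g * x := by exact_mod_cast hx
    have hy' : (u 1 : ℝ) = g * y := by exact_mod_cast hy
    have hp0 : (![x, y] : Fin 2 → ℤ) ≠ 0 := by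
      intro h
      have e0 := congrFun h 0
      have e1 := congrFun h 1
      simp at e0 e1
      apply hu0
      ext i; fin_cases i
      · simp [hx, e0]
      · simp [hy, e1]
    have := tri_pt hQ hu hu hp0 ((g : ℝ)⁻¹) 0 (by positivity) le_rfl
      (by simpa using inv_le_one_of_one_le₀ hgr) (by
        ext i; fin_cases i
        · simp [castZ, hx']; field_simp
        · simp [castZ, hy']; field_simp)
    have he : ![x, y] = u := by simpa using this
    have e0 := congrFun he 0
    have e1 := congrFun he 1
    simp at e0 e1
    have k0 : ((g : ℤ) - 1) * x = 0 := by rw [sub_mul, ← hx, e0]; ring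
    have k1 : ((g : ℤ) - 1) * y = 0 := by rw [sub_mul, ← hy, e1]; ring
    rcases mul_eq_zero.1 k0 with k | k
    · omega
    · rcases mul_eq_zero.1 k1 with k' | k'
      · omega
      · exact absurd (by ext i; fin_cases i <;> simp [k, k']) hp0
  have hb := Int.gcd_eq_gcd_ab (u 0) (u 1)
  rw [hg] at hb
  refine ⟨![-Int.gcdB (u 0) (u 1), Int.gcdA (u 0) (u 1)], ?_⟩
  simp [dt]
  push_cast at hb
  linarith

theorem dt_lt_two {Q : Set (Fin 2 → ℝ)} (hQ : SmoothReflexivePolygon Q) {u v : Fin 2 → ℤ}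
    (hu : castZ u ∈ Q) (hu0 : u ≠ 0) (hv : castZ v ∈ Q) : dt u v < 2 := by
  by_contra! hd
  obtain ⟨r, hr⟩ := prim_pt hQ hu hu0
  set d := dt u v with hdd
  set m := dt v r with hm
  obtain ⟨k, hk1, hk2⟩ : ∃ k : ℤ, m ≤ d * k ∧ d * k ≤ m + d - 1 := by
    refine ⟨(m + d - 1) / d, ?_, ?_⟩
    · have := Int.lt_ediv_add_one_mul_self (m + d - 1) (by omega : 0 < d)
      linarith
    · exact Int.mul_ediv_self_le (by omega)
  set p : Fin 2 → ℤ := k • u + r with hp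
  have hup : dt u p = 1 := by
    rw [← hr]; simp [dt, hp]; ring
  have v0 : v 0 = m * u 0 + d * r 0 := by
    simp only [hm, hdd]; unfold dt at hr ⊢; linear_combination (- v 0) * hr
  have v1 : v 1 = m * u 1 + d * r 1 := by
    simp only [hm, hdd]; unfold dt at hr ⊢; linear_combination (- v 1) * hr
  have hdr : (2 : ℝ) ≤ d := by exact_mod_cast hd
  have hdp : (0 : ℝ) < d := by linarith
  have hk1r : (m : ℝ) ≤ d * k := by exact_mod_cast hk1
  have hk2r : (d : ℝ) * k ≤ m + d - 1 := by exact_mod_cast hk2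
  have hp0 : p ≠ 0 := by
    intro h; rw [h] at hup; simp [dt] at hup
  have v0r : (v 0 : ℝ) = m * u 0 + d * r 0 := by exact_mod_cast v0
  have v1r : (v 1 : ℝ) = m * u 1 + d * r 1 := by exact_mod_cast v1
  have := tri_pt hQ hu hv hp0 ((d * k - m) / d) (1 / d)
    (div_nonneg (by linarith) hdp.le) (by positivity)
    (by rw [← add_div, div_le_one hdp]; linarith) (by
      ext i; fin_cases i
      · simp [castZ, hp, v0r]; field_simp; ring
      · simp [castZ, hp, v1r]; field_simp; ring)
  rcases this with h | h
  · rw [h] at hup; unfold dt at hup; linarith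
  · rw [h] at hup; omega

def nzl (Q : Set (Fin 2 → ℝ)) : Set (Fin 2 → ℤ) := {v | v ≠ 0 ∧ castZ v ∈ Q}

theorem hull_nzl {Q : Set (Fin 2 → ℝ)} (hQ : SmoothReflexivePolygon Q) :
    Q = convexHull ℝ (castZ '' nzl Q) := by
  have hQ' := hQ
  obtain ⟨⟨V, hV⟩, h0, hint, hadj⟩ := hQ
  have hfin : (castZ '' (V : Set (Fin 2 → ℤ))).Finite := V.finite_toSet.image _
  have hconv : Convex ℝ Q := hV ▸ convex_convexHull ℝ _
  have hcomp : IsCompact Q := hV ▸ hfin.isCompact_convexHull ℝ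
  have hsub : Q.extremePoints ℝ ⊆ castZ '' (V : Set (Fin 2 → ℤ)) := by
    intro x hx
    rw [hV] at hx
    exact extremePoints_convexHull_subset (𝕜 := ℝ) hx
  have hE := closure_convexHull_extremePoints hcomp hconv
  rw [((hfin.subset hsub).isClosed_convexHull ℝ).closure_eq] at hE
  have : Q.extremePoints ℝ ⊆ castZ '' nzl Q := by
    intro x hx
    obtain ⟨v, -, rfl⟩ := hsub hx
    refine ⟨v, ⟨?_, extremePoints_subset hx⟩, rfl⟩
    rintro rfl
    have h0' : (castZ (0 : Fin 2 → ℤ) : Fin 2 → ℝ) ∈ interior Q := by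
      convert h0; ext i; simp [castZ]
    exact Set.disjoint_left.1 (disjoint_interior_extremePoints Q) h0' hx
  apply Subset.antisymm
  · conv_lhs => rw [← hE]
    exact convexHull_mono this
  · refine convexHull_min ?_ hconv
    rintro _ ⟨v, hv, rfl⟩
    exact hv.2

theorem half_nzl {Q : Set (Fin 2 → ℝ)} (hQ : SmoothReflexivePolygon Q) {s : Fin 2 → ℤ}
    (hs : s ≠ 0) : ∃ w ∈ nzl Q, dt s w < 0 := by
  by_contra! hcon
  have hsub : Q ⊆ {x | 0 ≤ (s 0 : ℝ) * x 1 - s 1 * x 0} := by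
    rw [hull_nzl hQ]
    refine convexHull_min ?_ ?_
    · rintro _ ⟨v, hv, rfl⟩
      have := hcon v hv
      unfold dt at this
      simp only [mem_ofPred_eq, castZ]
      exact_mod_cast this
    · intro x hx y hy a b ha hb hab
      simp only [mem_ofPred_eq, Pi.add_apply, Pi.smul_apply, smul_eq_mul] at *
      nlinarith [mul_nonneg ha hx, mul_nonneg hb hy]
  have h0 := hQ.2.1
  rw [mem_interior_iff_mem_nhds] at h0
  let γ : ℝ → Fin 2 → ℝ := fun t => ![t * s 1, -t * s 0]
  have hγ : Continuous γ := by
    apply continuous_pi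
    intro i; fin_cases i <;> simp [γ] <;> fun_prop
  have hγ0 : γ 0 = 0 := by ext i; fin_cases i <;> simp [γ]
  have hev : ∀ᶠ t in nhds (0 : ℝ), γ t ∈ Q := by
    apply hγ.continuousAt
    rw [hγ0]; exact h0
  obtain ⟨ε, hε, hb⟩ := Metric.eventually_nhds_iff.1 hev
  have hm := hb (y := ε / 2) (by rw [dist_zero_right, Real.norm_eq_abs, abs_of_pos] <;> linarith)
  have := hsub hm
  simp [γ] at this
  have hpos : (0 : ℝ) < s 0 * s 0 + s 1 * s 1 := by
    have : 0 < s 0 * s 0 + s 1 * s 1 := by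
      by_contra! h
      apply hs
      ext i; fin_cases i
      · simp; nlinarith [mul_self_nonneg (s 0), mul_self_nonneg (s 1)]
      · simp; nlinarith [mul_self_nonneg (s 0), mul_self_nonneg (s 1)]
    exact_mod_cast this
  nlinarith

def hx : Fin 6 → Fin 2 → ℤ := ![![1,0], ![1,1], ![0,1], ![-1,0], ![-1,-1], ![0,-1]]

def Cs : Fin 5 → Finset (Fin 6) :=
  ![{0,1,2,3,4,5}, {1,2,3,4,5}, {1,3,4,5}, {1,2,4,5}, {1,3,5}]

def poly (C : Finset (Fin 6)) : Set (Fin 2 → ℝ) :=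
  convexHull ℝ (castZ '' (hx '' (C : Set (Fin 6))))

def LA (A : Matrix (Fin 2) (Fin 2) ℤ) : (Fin 2 → ℝ) →ₗ[ℝ] (Fin 2 → ℝ) :=
  Matrix.toLin' (A.map (Int.cast : ℤ → ℝ))

theorem LA_coe (A : Matrix (Fin 2) (Fin 2) ℤ) :
    (fun x : Fin 2 → ℝ => fun i => ∑ j, (A i j : ℝ) * x j) = LA A := by
  ext x i
  simp [LA, Matrix.mulVec, dotProduct]

theorem LA_castZ (A : Matrix (Fin 2) (Fin 2) ℤ) (v : Fin 2 → ℤ) :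
    LA A (castZ v) = castZ (A.mulVec v) := by
  rw [← LA_coe]
  ext i
  simp [castZ, Matrix.mulVec, dotProduct]

theorem LA_mul (A B : Matrix (Fin 2) (Fin 2) ℤ) (x : Fin 2 → ℝ) :
    LA (A * B) x = LA A (LA B x) := by
  rw [← LA_coe, ← LA_coe, ← LA_coe]
  ext i
  simp [Matrix.mul_apply, Fin.sum_univ_two]
  ring

theorem LA_one (x : Fin 2 → ℝ) : LA 1 x = x := by
  rw [← LA_coe]
  ext i
  simp [Matrix.one_apply]

theorem LA_hull (A : Matrix (Fin 2) (Fin 2) ℤ) (S : Set (Fin 2 → ℤ)) :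
    LA A '' (convexHull ℝ (castZ '' S)) = convexHull ℝ (castZ '' (A.mulVec '' S)) := by
  rw [LinearMap.image_convexHull, image_image, image_image]
  simp only [LA_castZ]

theorem linEquiv_symm {Q R : Set (Fin 2 → ℝ)} (h : LinEquiv Q R) : LinEquiv R Q := by
  obtain ⟨A, B, h1, h2, h3⟩ := h
  refine ⟨B, A, h2, h1, ?_⟩
  rw [LA_coe] at h3 ⊢
  rw [h3, image_image]
  simp only [← LA_mul, h2, LA_one, image_id']

theorem linEquiv_trans {Q R T : Set (Fin 2 → ℝ)} (h : LinEquiv Q R) (h' : LinEquiv R T) :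
    LinEquiv Q T := by
  obtain ⟨A, B, h1, h2, h3⟩ := h
  obtain ⟨A', B', h1', h2', h3'⟩ := h'
  refine ⟨A' * A, B * B', ?_, ?_, ?_⟩
  · rw [Matrix.mul_assoc, ← Matrix.mul_assoc A, h1, Matrix.one_mul, h1']
  · rw [Matrix.mul_assoc, ← Matrix.mul_assoc B', h2', Matrix.one_mul, h2]
  rw [LA_coe] at h3 h3' ⊢
  rw [h3', h3, image_image]
  simp only [← LA_mul]

theorem poly_le {C : Finset (Fin 6)} (a b c : ℝ)
    (h : ∀ i ∈ C, a * hx i 0 + b * hx i 1 ≤ c) {x : Fin 2 → ℝ} (hxx : x ∈ poly C) :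
    a * x 0 + b * x 1 ≤ c := by
  have : poly C ⊆ {x | a * x 0 + b * x 1 ≤ c} := by
    refine convexHull_min ?_ ?_
    · rintro _ ⟨_, ⟨i, hi, rfl⟩, rfl⟩
      exact h i hi
    · intro x hx y hy p q hp hq hpq
      simp only [mem_ofPred_eq, Pi.add_apply, Pi.smul_apply, smul_eq_mul] at *
      have hq' : q = 1 - p := by linarith
      subst hq'
      nlinarith [mul_le_mul_of_nonneg_left hx hp, mul_le_mul_of_nonneg_left hy hq]
  exact this hxx

theorem poly_leZ {C : Finset (Fin 6)} (a b c : ℤ)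
    (h : ∀ i ∈ C, a * hx i 0 + b * hx i 1 ≤ c) {x : Fin 2 → ℤ} (hxx : castZ x ∈ poly C) :
    a * x 0 + b * x 1 ≤ c := by
  have := poly_le (C := C) a b c (by intro i hi; exact_mod_cast h i hi) hxx
  simp only [castZ] at this
  exact_mod_cast this

theorem hx_form : ∀ i j : Fin 6, i ≠ j → 
    (2 * hx i 0 - hx i 1) * hx j 0 + (2 * hx i 1 - hx i 0) * hx j 1 ≤ 1 := by decide

theorem hx_form' : ∀ i : Fin 6, 
    (2 * hx i 0 - hx i 1) * hx i 0 + (2 * hx i 1 - hx i 0) * hx i 1 = 2 := by decide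

theorem hx_form2 : ∀ i j : Fin 6,
    (2 * hx i 0 - hx i 1) * hx j 0 + (2 * hx i 1 - hx i 0) * hx j 1 ≤ 2 := by decide

theorem hx_ne : ∀ i : Fin 6, hx i ≠ 0 := by decide

theorem hx_inj : Function.Injective hx := by decide

theorem hx_of_small {x : Fin 2 → ℤ} (h0 : x ≠ 0) (a1 : x 0 ≤ 1) (a2 : -1 ≤ x 0) (b1 : x 1 ≤ 1)
    (b2 : -1 ≤ x 1) (c1 : x 0 - x 1 ≤ 1) (c2 : x 1 - x 0 ≤ 1) : ∃ i, x = hx i := by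
  have hxx : x = ![x 0, x 1] := by ext i; fin_cases i <;> rfl
  generalize x 0 = p at *
  generalize x 1 = q at *
  subst hxx
  have hp : p = -1 ∨ p = 0 ∨ p = 1 := by omega
  have hq : q = -1 ∨ q = 0 ∨ q = 1 := by omega
  rcases hp with rfl | rfl | rfl <;> rcases hq with rfl | rfl | rfl <;>
    first
    | omega
    | exact absurd (by decide) h0
    | decide

theorem nzl_poly (C : Finset (Fin 6)) : nzl (poly C) = hx '' (C : Set (Fin 6)) := by
  ext x
  constructor
  · rintro ⟨h0, hm⟩
    have a1 := poly_leZ 1 0 1 (fun i _ => by clear * -; revert i; decide) hm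
    have a2 := poly_leZ (-1) 0 1 (fun i _ => by clear * -; revert i; decide) hm
    have b1 := poly_leZ 0 1 1 (fun i _ => by clear * -; revert i; decide) hm
    have b2 := poly_leZ 0 (-1) 1 (fun i _ => by clear * -; revert i; decide) hm
    have c1 := poly_leZ 1 (-1) 1 (fun i _ => by clear * -; revert i; decide) hm
    have c2 := poly_leZ (-1) 1 1 (fun i _ => by clear * -; revert i; decide) hm
    obtain ⟨i, rfl⟩ := hx_of_small h0 (by linarith) (by linarith) (by linarith) (by linarith)
      (by linarith) (by linarith)
    refine ⟨i, ?_, rfl⟩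
    by_contra hi
    have := poly_leZ (2 * hx i 0 - hx i 1) (2 * hx i 1 - hx i 0) 1
      (fun j hj => hx_form i j (by rintro rfl; exact hi hj)) hm
    rw [hx_form' i] at this
    omega
  · rintro ⟨i, hi, rfl⟩
    exact ⟨hx_ne i, subset_convexHull ℝ _ ⟨_, ⟨i, hi, rfl⟩, rfl⟩⟩

theorem mulVec_inj {A B : Matrix (Fin 2) (Fin 2) ℤ} (h : B * A = 1) :
    Function.Injective A.mulVec := by
  intro x y hxy
  have := congrArg B.mulVec hxy
  rwa [Matrix.mulVec_mulVec, Matrix.mulVec_mulVec, h, Matrix.one_mulVec, Matrix.one_mulVec] at this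

theorem nzl_image {A B : Matrix (Fin 2) (Fin 2) ℤ} (h : A * B = 1) (h' : B * A = 1)
    (Q : Set (Fin 2 → ℝ)) : nzl (LA A '' Q) = A.mulVec '' nzl Q := by
  ext x
  constructor
  · rintro ⟨h0, y, hy, hxy⟩
    have hy' : y = castZ (B.mulVec x) := by
      rw [← LA_castZ, ← hxy, ← LA_mul, h', LA_one]
    have hx' : A.mulVec (B.mulVec x) = x := by rw [Matrix.mulVec_mulVec, h, Matrix.one_mulVec]
    refine ⟨B.mulVec x, ⟨?_, hy' ▸ hy⟩, hx'⟩
    intro h0'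
    rw [h0'] at hx'
    simp at hx'
    exact h0 hx'.symm
  · rintro ⟨y, ⟨h0, hy⟩, rfl⟩
    refine ⟨?_, castZ y, hy, LA_castZ A y⟩
    intro h0'
    apply h0
    apply mulVec_inj h'
    simpa using h0'

theorem linEquiv_poly {C D : Finset (Fin 6)} (h : LinEquiv (poly C) (poly D)) :
    ∃ A : Matrix (Fin 2) (Fin 2) ℤ, Function.Injective A.mulVec ∧
      hx '' (D : Set (Fin 6)) = A.mulVec '' (hx '' (C : Set (Fin 6))) := by
  obtain ⟨A, B, h1, h2, h3⟩ := h
  refine ⟨A, mulVec_inj h2, ?_⟩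
  rw [LA_coe] at h3
  rw [← nzl_poly, h3, nzl_image h1 h2, nzl_poly]

theorem linEquiv_card {C D : Finset (Fin 6)} (h : LinEquiv (poly C) (poly D)) :
    C.card = D.card := by
  obtain ⟨A, hA, h⟩ := linEquiv_poly h
  have := congrArg Set.ncard h
  rw [ncard_image_of_injective _ hA, ncard_image_of_injective _ hx_inj,
    ncard_image_of_injective _ hx_inj, ncard_coe_finset, ncard_coe_finset] at this
  exact this.symm

theorem hx_neg : ∀ i, - hx i = hx (i + 3) := by decide

theorem linEquiv_sym {C D : Finset (Fin 6)} (h : LinEquiv (poly C) (poly D))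
    (hC : ∀ i ∈ C, i + 3 ∈ C) : ∀ i ∈ D, i + 3 ∈ D := by
  obtain ⟨A, hA, h⟩ := linEquiv_poly h
  intro i hi
  have : hx i ∈ hx '' (D : Set (Fin 6)) := ⟨i, hi, rfl⟩
  rw [h] at this
  obtain ⟨_, ⟨j, hj, rfl⟩, hj'⟩ := this
  have : hx (i + 3) ∈ hx '' (D : Set (Fin 6)) := by
    rw [h]
    refine ⟨hx (j + 3), ⟨j + 3, hC j hj, rfl⟩, ?_⟩
    rw [← hx_neg, ← hx_neg, Matrix.mulVec_neg, hj']
  obtain ⟨k, hk, hk'⟩ := this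
  rw [← hx_inj hk']
  exact hk

theorem not_linEquiv (i j : Fin 5) (hij : i ≠ j) : ¬ LinEquiv (poly (Cs i)) (poly (Cs j)) := by
  intro h
  have hc := linEquiv_card h
  have hs := linEquiv_sym h
  have hs' := linEquiv_sym (linEquiv_symm h)
  clear h
  revert i j
  decide

theorem comb4 {C : Finset (Fin 6)} (i j k l : Fin 6) (hi : i ∈ C) (hj : j ∈ C) (hk : k ∈ C)
    (hl : l ∈ C) (p q r s : ℝ) (hp : 0 ≤ p) (hq : 0 ≤ q) (hr : 0 ≤ r) (hs : 0 ≤ s)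
    (h : p + q + r + s = 1) {x : Fin 2 → ℝ}
    (hx : x = p • castZ (hx i) + q • castZ (hx j) + r • castZ (hx k) + s • castZ (hx l)) :
    x ∈ poly C := by
  have hm : ∀ i ∈ C, castZ (_root_.hx i) ∈ poly C := fun i hi =>
    subset_convexHull ℝ _ ⟨_, ⟨i, hi, rfl⟩, rfl⟩
  have := (convex_convexHull ℝ (castZ '' (_root_.hx '' (C : Set (Fin 6))))).sum_mem
    (t := Finset.univ) (w := ![p, q, r, s])
    (z := ![castZ (_root_.hx i), castZ (_root_.hx j), castZ (_root_.hx k), castZ (_root_.hx l)])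
    (by intro i _; fin_cases i <;> simpa) (by simpa [Fin.sum_univ_four] using h)
    (by intro i _; fin_cases i
        · exact hm _ hi
        · exact hm _ hj
        · exact hm _ hk
        · exact hm _ hl)
  rw [hx, poly]
  simpa [Fin.sum_univ_four] using this

theorem zero_mem_int (C : Finset (Fin 6)) (h : {1,3,5} ⊆ C ∨ {1,2,4,5} ⊆ C) :
    (0 : Fin 2 → ℝ) ∈ interior (poly C) := by
  rw [mem_interior]
  refine ⟨{x | |x 0| < 1/8} ∩ {x | |x 1| < 1/8}, ?_, ?_, by simp⟩
  · rintro x ⟨h0, h1⟩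
    simp only [mem_ofPred_eq, abs_lt] at h0 h1
    rcases h with h | h
    · refine comb4 1 3 5 5 (h (by decide)) (h (by decide)) (h (by decide)) (h (by decide))
        ((1 + x 0 + x 1) / 3) ((1 + x 0 + x 1) / 3 - x 0) ((1 + x 0 + x 1) / 3 - x 1) 0
        (by linarith) (by linarith) (by linarith) le_rfl (by ring) ?_
      ext i; fin_cases i <;> simp [castZ, hx]
    · refine comb4 1 2 4 5 (h (by decide)) (h (by decide)) (h (by decide)) (h (by decide))
        (1/4 + x 0 / 2) (1/4 + (x 1 - x 0) / 2) (1/4 - x 0 / 2) (1/4 - (x 1 - x 0) / 2)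
        (by linarith) (by linarith) (by linarith) (by linarith) (by ring) ?_
      ext i; fin_cases i <;> simp [castZ, hx] <;> ring
  · exact (isOpen_lt (by fun_prop) (by fun_prop)).inter (isOpen_lt (by fun_prop) (by fun_prop))

theorem hx_det : ∀ i j : Fin 6, i ≠ j → hx i = - hx j ∨
    IsUnit (hx i 0 * hx j 1 - hx i 1 * hx j 0) := by
  simp only [Int.isUnit_iff]; decide

theorem poly_int (C : Finset (Fin 6)) (h : (0 : Fin 2 → ℝ) ∈ interior (poly C))
    : SmoothReflexivePolygon (poly C) := by
  refine ⟨⟨C.image hx, by simp [poly]⟩, h, ?_, ?_⟩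
  · apply Subset.antisymm
    · rintro _ ⟨hi, v, rfl⟩
      change castZ v ∈ interior (poly C) at hi
      change castZ v = 0
      by_contra hne
      have hv0 : v ≠ 0 := by
        rintro rfl; apply hne; ext i; simp [castZ]
      have hv : v ∈ nzl (poly C) := ⟨hv0, interior_subset hi⟩
      rw [nzl_poly] at hv
      obtain ⟨i, -, rfl⟩ := hv
      rw [mem_interior_iff_mem_nhds] at hi
      have hγ : Continuous (fun t : ℝ => (1 + t) • castZ (hx i)) := by fun_prop
      have hev : ∀ᶠ t in nhds (0 : ℝ), (1 + t) • castZ (hx i) ∈ poly C := by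
        apply hγ.continuousAt
        simpa using hi
      obtain ⟨ε, hε, hb⟩ := Metric.eventually_nhds_iff.1 hev
      have hm := hb (y := ε / 2)
        (by rw [dist_zero_right, Real.norm_eq_abs, abs_of_pos] <;> linarith)
      have hle := poly_le (C := C) (2 * hx i 0 - hx i 1) (2 * hx i 1 - hx i 0) 2
        (by
          intro j _
          have : (2 * hx i 0 - hx i 1) * hx j 0 + (2 * hx i 1 - hx i 0) * hx j 1 ≤ 2 :=
            hx_form2 i j
          exact_mod_cast this) hm
      have heq : ((2 * hx i 0 - hx i 1) * hx i 0 + (2 * hx i 1 - hx i 0) * hx i 1 : ℝ) = 2 := by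
        exact_mod_cast hx_form' i
      simp only [castZ, Pi.smul_apply, smul_eq_mul] at hle
      nlinarith
    · rintro _ rfl
      exact ⟨h, 0, by ext i; simp⟩
  · intro v w hv hw hne hseg
    have key : ∀ v : Fin 2 → ℤ, castZ v ∈ (poly C).extremePoints ℝ → ∃ i, v = hx i := by
      intro v hv
      obtain ⟨_, ⟨i, -, rfl⟩, hi⟩ := extremePoints_convexHull_subset (𝕜 := ℝ) hv
      exact ⟨i, (castZ_inj_s19 hi).symm⟩
    obtain ⟨i, rfl⟩ := key v hv
    obtain ⟨j, rfl⟩ := key w hw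
    rcases hx_det i j (by rintro rfl; exact hne rfl) with h' | h'
    · exfalso
      have : (0 : Fin 2 → ℝ) ∈ segment ℝ (castZ (hx i)) (castZ (hx j)) := by
        refine ⟨1/2, 1/2, by norm_num, by norm_num, by norm_num, ?_⟩
        rw [h']
        ext k; simp [castZ]
      exact (hseg this).2 h
    · exact h'

def Rk : Fin 6 → Matrix (Fin 2) (Fin 2) ℤ :=
  ![!![1,0;0,1], !![1,-1;1,0], !![0,-1;1,-1], !![-1,0;0,-1], !![-1,1;-1,0], !![0,1;-1,1]]

theorem Rk_hx : ∀ k i, (Rk k).mulVec (hx i) = hx (i + k) := by decide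

theorem Rk_inv : ∀ k, Rk k * Rk (-k) = 1 := by decide

theorem combi : ∀ C : Finset (Fin 6), (∀ k, ∃ i ∈ C, dt (hx k) (hx i) < 0) →
    ∃ j : Fin 5, ∃ k : Fin 6, C = (Cs j).image (· + k) := by
  have h : ∀ k i : Fin 6, dt (hx k) (hx i) < 0 ↔ (i = k + 4 ∨ i = k + 5) := by decide
  simp only [h]
  decide

theorem poly_class (C : Finset (Fin 6)) (h : ∀ k, ∃ i ∈ C, dt (hx k) (hx i) < 0) :
    ∃ j, LinEquiv (poly (Cs j)) (poly C) := by
  obtain ⟨j, k, rfl⟩ := combi C h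
  refine ⟨j, Rk k, Rk (-k), Rk_inv k, by simpa using Rk_inv (-k), ?_⟩
  rw [LA_coe, poly, poly, LA_hull, image_image]
  simp only [Rk_hx, Finset.coe_image, image_image]

theorem frame_class {Q : Set (Fin 2 → ℝ)} (hQ : SmoothReflexivePolygon Q) {u v : Fin 2 → ℤ}
    (hd : dt u v = 1 ∨ dt u v = -1)
    (hall : ∀ w ∈ nzl Q, ∃ i, w = hx i 0 • u + hx i 1 • v) :
    ∃ j, LinEquiv Q (poly (Cs j)) := by
  classical
  let M : Matrix (Fin 2) (Fin 2) ℤ := !![u 0, v 0; u 1, v 1]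
  let N : Matrix (Fin 2) (Fin 2) ℤ := dt u v • !![v 1, -v 0; -u 1, u 0]
  have hdd : dt u v * dt u v = 1 := by rcases hd with h | h <;> rw [h] <;> norm_num
  have hMN : M * N = 1 := by
    ext i j
    fin_cases i <;> fin_cases j <;> simp [M, N, Matrix.mul_apply, Fin.sum_univ_two]
    · rw [← hdd]; unfold dt; ring
    · ring
    · ring
    · rw [← hdd]; unfold dt; ring
  have hNM : N * M = 1 := mul_eq_one_comm.1 hMN
  have hM : ∀ x, M.mulVec x = x 0 • u + x 1 • v := by
    intro x
    ext i
    fin_cases i <;> simp [M, Matrix.mulVec, dotProduct, Fin.sum_univ_two] <;> ring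
  let C : Finset (Fin 6) := Finset.univ.filter (fun i => M.mulVec (hx i) ∈ nzl Q)
  have hCQ : nzl Q = M.mulVec '' (hx '' (C : Set (Fin 6))) := by
    ext w
    constructor
    · intro hw
      obtain ⟨i, hi⟩ := hall w hw
      rw [← hM] at hi
      exact ⟨hx i, ⟨i, Finset.mem_filter.2 ⟨Finset.mem_univ _, hi ▸ hw⟩, rfl⟩, hi.symm⟩
    · rintro ⟨_, ⟨i, hi, rfl⟩, rfl⟩
      exact (Finset.mem_filter.1 hi).2
  have hQC : LinEquiv (poly C) Q := by
    refine ⟨M, N, hMN, hNM, ?_⟩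
    rw [LA_coe, poly, LA_hull, ← hCQ]
    exact hull_nzl hQ
  have hC : ∀ k, ∃ i ∈ C, dt (hx k) (hx i) < 0 := by
    intro k
    have hne : M.mulVec (hx k) ≠ 0 := by
      intro h
      apply hx_ne k
      apply mulVec_inj hNM
      rw [h, Matrix.mulVec_zero]
    have hne' : dt u v • M.mulVec (hx k) ≠ 0 := by
      refine smul_ne_zero ?_ hne
      rcases hd with h | h <;> rw [h] <;> norm_num
    obtain ⟨w, hw, hlt⟩ := half_nzl hQ hne'
    rw [hCQ] at hw
    obtain ⟨_, ⟨i, hi, rfl⟩, rfl⟩ := hw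
    refine ⟨i, hi, ?_⟩
    have : dt (dt u v • M.mulVec (hx k)) (M.mulVec (hx i))
        = (dt u v * dt u v) * dt (hx k) (hx i) := by
      rw [hM, hM]
      simp only [dt, Pi.add_apply, Pi.smul_apply, smul_eq_mul]
      ring
    rw [this, hdd, one_mul] at hlt
    exact hlt
  obtain ⟨j, hj⟩ := poly_class C hC
  exact ⟨j, linEquiv_symm (linEquiv_trans hj hQC)⟩

theorem smooth_class {Q : Set (Fin 2 → ℝ)} (hQ : SmoothReflexivePolygon Q) :
    ∃ j, LinEquiv Q (poly (Cs j)) := by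
  obtain ⟨u, hu, -⟩ := half_nzl hQ (s := ![1, 0]) (by decide)
  obtain ⟨v, hv, hvd⟩ := half_nzl hQ hu.1
  have hb : ∀ a ∈ nzl Q, ∀ b ∈ nzl Q, dt a b ≤ 1 ∧ -1 ≤ dt a b := by
    intro a ha b hb
    have h1 := dt_lt_two hQ ha.2 ha.1 hb.2
    have h2 := dt_lt_two hQ hb.2 hb.1 ha.2
    have : dt b a = - dt a b := by unfold dt; ring
    omega
  have hd : dt u v = -1 := by have := hb u hu v hv; omega
  -- coordinates: w = α u + β v with α = -dt w v, β = -dt u w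
  have hco : ∀ w, w = (- dt w v) • u + (- dt u w) • v := by
    intro w
    ext i
    unfold dt at *
    fin_cases i
    · simp; linear_combination (w 0) * hd
    · simp; linear_combination (w 1) * hd
  by_cases hcase : ∃ w ∈ nzl Q, dt w v * dt u w = -1
  · obtain ⟨w, hw, hwd⟩ := hcase
    refine frame_class hQ (u := u) (v := -v) (Or.inl (by unfold dt at *; simp; linarith)) ?_
    intro z hz
    have h1 := hb z hz v hv
    have h2 := hb u hu z hz
    have h3 := hb w hw z hz
    have h4 := hb w hw v hv
    have h5 := hb u hu w hw
    have e : dt w z = dt w v * dt u z * (-1) + dt u w * dt z v := by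
      have := hd
      have e1 := hco w
      have e2 := hco z
      have hexp : dt w z = dt ((- dt w v) • u + (- dt u w) • v) ((- dt z v) • u + (- dt u z) • v) := by
        rw [← e1, ← e2]
      have hbil : ∀ a b c d : ℤ, dt (a • u + b • v) (c • u + d • v) = (a * d - b * c) * dt u v := by
        intro a b c d; simp [dt]; ring
      rw [hexp, hbil, hd]; ring
    have hz0 := hz.1
    obtain ⟨i, hi⟩ := hx_of_small (x := ![- dt z v, dt u z]) (by
        intro h
        have e0 := congrFun h 0
        have e1 := congrFun h 1
        simp at e0 e1
        apply hz0
        rw [hco z, e0, e1]; simp)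
      (by simp; omega) (by simp; omega) (by simp; omega) (by simp; omega)
      (by
        simp
        generalize dt w v = a at *
        generalize dt u w = b at *
        rw [e] at h3
        rcases Int.eq_one_or_neg_one_of_mul_eq_neg_one hwd with rfl | rfl
        · have : b = -1 := by linarith
          subst this; omega
        · have : b = 1 := by linarith
          subst this; omega)
      (by
        simp
        generalize dt w v = a at *
        generalize dt u w = b at *
        rw [e] at h3
        rcases Int.eq_one_or_neg_one_of_mul_eq_neg_one hwd with rfl | rfl
        · have : b = -1 := by linarith
          subst this; omega
        · have : b = 1 := by linarith
          subst this; omega)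
    refine ⟨i, ?_⟩
    rw [← hi]
    conv_lhs => rw [hco z]
    simp
  · push Not at hcase
    refine frame_class hQ (u := u) (v := v) (Or.inr hd) ?_
    intro z hz
    have h1 := hb z hz v hv
    have h2 := hb u hu z hz
    have h3 := hcase z hz
    have hz0 := hz.1
    have hne : ¬ (dt z v = 1 ∧ dt u z = -1) ∧ ¬ (dt z v = -1 ∧ dt u z = 1) := by
      constructor <;> rintro ⟨a, b⟩ <;> rw [a, b] at h3 <;> norm_num at h3
    obtain ⟨i, hi⟩ := hx_of_small (x := ![- dt z v, - dt u z]) (by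
        intro h
        have e0 := congrFun h 0
        have e1 := congrFun h 1
        simp at e0 e1
        apply hz0
        rw [hco z, e0, e1]; simp)
      (by simp; omega) (by simp; omega) (by simp; omega) (by simp; omega)
      (by simp; omega) (by simp; omega)
    refine ⟨i, ?_⟩
    rw [← hi]
    exact hco z

/-- Up to lattice equivalence, there are exactly 5 smooth reflexive polygons
(corresponding to the 5 smooth toric del Pezzo surfaces). -/
theorem five_smooth_reflexive_polygons :
    ∃ reps : Fin 5 → Set (Fin 2 → ℝ),
      (∀ i, SmoothReflexivePolygon (reps i)) ∧
      (∀ i j, i ≠ j → ¬ LinEquiv (reps i) (reps j)) ∧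
      (∀ Q : Set (Fin 2 → ℝ), SmoothReflexivePolygon Q → ∃ i, LinEquiv Q (reps i)) := by
  refine ⟨fun i => poly (Cs i), fun i => ?_, not_linEquiv, fun Q hQ => smooth_class hQ⟩
  apply poly_int
  apply zero_mem_int
  revert i
  decide
end
end
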